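/- Let K belong to the class R and let t be a singular vertex of K. Let u ∈ lk(t,K) be a non-singular vertex such that lk(t,K) ∩ lk(u,K) − lk(ut,K) equals the half-open edge (t₁, w] or the single vertex {w}, where w is a vertex of lk(u,K) ∩ lk(t,K) − lk(ut,K) and t₁ ∈ lk(ut,K) is a singular vertex. Then d(tw) ≥ d(tu) and d(uw) ≥ d(tu). -/

import Mathlib

/-- An abstract simplicial complex on vertex set `ℕ`: a finite, downward closed
collection of nonempty finite sets of vertices. -/
structure SComplex where
  faces : Finset (Finset ℕ)
  not_empty_mem : ∅ ∉ faces
  down_closed : ∀ s ∈ faces, ∀ t ⊆ s, t ≠ ∅ → t ∈ faces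

namespace SComplex

/-- The set of vertices of the complex. -/
def vertexSet (K : SComplex) : Finset ℕ := K.faces.sup id

/-- `fnum K i` is the number of `i`-dimensional faces of `K`. -/
def fnum (K : SComplex) (i : ℕ) : ℕ := (K.faces.filter fun s => s.card = i + 1).card

/-- `g₂` for a 3-dimensional complex: `f₁ - 4 f₀ + 10`. -/
def g2 (K : SComplex) : ℤ := (K.fnum 1 : ℤ) - 4 * (K.fnum 0 : ℤ) + 10

/-- `g₂` for a 2-dimensional complex: `f₁ - 3 f₀ + 6`. -/
def g2surf (K : SComplex) : ℤ := (K.fnum 1 : ℤ) - 3 * (K.fnum 0 : ℤ) + 6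

/-- Euler characteristic of a (2-dimensional) complex. -/
def euler (K : SComplex) : ℤ := (K.fnum 0 : ℤ) - (K.fnum 1 : ℤ) + (K.fnum 2 : ℤ)

/-- The link of a face `σ`. -/
def lk (K : SComplex) (σ : Finset ℕ) : SComplex where
  faces := K.faces.filter fun γ => γ ∩ σ = ∅ ∧ γ ∪ σ ∈ K.faces
  not_empty_mem := fun h => K.not_empty_mem (Finset.mem_filter.mp h).1
  down_closed := by
    intro s hs t hts ht
    rw [Finset.mem_filter] at hs ⊢
    refine ⟨K.down_closed s hs.1 t hts ht, ?_, ?_⟩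
    · have h1 : t ∩ σ ⊆ s ∩ σ := Finset.inter_subset_inter hts (Finset.Subset.refl σ)
      rw [hs.2.1] at h1
      exact Finset.subset_empty.mp h1
    · refine K.down_closed (s ∪ σ) hs.2.2 (t ∪ σ)
        (Finset.union_subset_union hts (Finset.Subset.refl σ)) ?_
      intro hc
      exact ht (Finset.union_eq_empty.mp hc).1

/-- The (closed) star of a face `σ`. -/
def st (K : SComplex) (σ : Finset ℕ) : SComplex where
  faces := K.faces.filter fun α => α ∪ σ ∈ K.faces
  not_empty_mem := fun h => K.not_empty_mem (Finset.mem_filter.mp h).1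
  down_closed := by
    intro s hs t hts ht
    rw [Finset.mem_filter] at hs ⊢
    refine ⟨K.down_closed s hs.1 t hts ht, ?_⟩
    refine K.down_closed (s ∪ σ) hs.2 (t ∪ σ)
      (Finset.union_subset_union hts (Finset.Subset.refl σ)) ?_
    intro hc
    exact ht (Finset.union_eq_empty.mp hc).1

/-- A facet is a maximal face. -/
def IsFacet (K : SComplex) (s : Finset ℕ) : Prop :=
  s ∈ K.faces ∧ ∀ t ∈ K.faces, s ⊆ t → s = t

/-- A pure `d`-dimensional complex: all facets have `d+1` vertices. -/
def IsPure (K : SComplex) (d : ℕ) : Prop :=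
  K.faces.Nonempty ∧ ∀ s, K.IsFacet s → s.card = d + 1

/-- Two facets are adjacent if they share a codimension-one face. -/
def FacetAdj (K : SComplex) (s t : Finset ℕ) : Prop :=
  K.IsFacet s ∧ K.IsFacet t ∧ (s ∩ t).card + 1 = s.card

/-- Strong connectedness: any two facets are joined by a chain of facets, consecutive
ones sharing a codimension-one face. -/
def StronglyConnected (K : SComplex) : Prop :=
  ∀ s t, K.IsFacet s → K.IsFacet t → Relation.ReflTransGen K.FacetAdj s t

/-- Two vertices are adjacent if they span an edge. -/
def VertAdj (K : SComplex) (u v : ℕ) : Prop := ({u, v} : Finset ℕ) ∈ K.faces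

/-- Connectedness of a complex (via its 1-skeleton). -/
def Conn (K : SComplex) : Prop :=
  K.faces.Nonempty ∧
    ∀ u v, {u} ∈ K.faces → {v} ∈ K.faces → Relation.ReflTransGen K.VertAdj u v

/-- A normal `d`-pseudomanifold: pure, strongly connected, every `(d-1)`-face is in
exactly two facets, and links of faces of dimension at most `d-2` are connected. -/
def IsNormalPseudomanifold (K : SComplex) (d : ℕ) : Prop :=
  K.IsPure d ∧ K.StronglyConnected ∧
    (∀ s ∈ K.faces, s.card = d →
      (K.faces.filter fun F => F.card = d + 1 ∧ s ⊆ F).card = 2) ∧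
    (∀ s ∈ K.faces, s.card ≤ d - 1 → (K.lk s).Conn)

/-- The geometric realization `|K|`, as a subspace of `ℕ → ℝ`. -/
def realSpace (K : SComplex) : Set (ℕ → ℝ) :=
  {w | (∀ v, 0 ≤ w v) ∧ ∃ s ∈ K.faces, (∀ v, w v ≠ 0 → v ∈ s) ∧ ∑ v ∈ s, w v = 1}

/-- The link of the vertex `v` triangulates the `(d-1)`-sphere. -/
def HasSphereLink (K : SComplex) (d : ℕ) (v : ℕ) : Prop :=
  Nonempty (↥((K.lk {v}).realSpace) ≃ₜ
    ↥(Metric.sphere (0 : EuclideanSpace ℝ (Fin d)) 1))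

/-- A singular vertex of a normal 3-pseudomanifold: its link is not a 2-sphere. -/
def IsSingular (K : SComplex) (v : ℕ) : Prop :=
  {v} ∈ K.faces ∧ ¬ K.HasSphereLink 3 v

/-- `d(σ)`: the number of vertices of the link of `σ`. -/
def deg (K : SComplex) (σ : Finset ℕ) : ℕ := (K.lk σ).fnum 0

/-- The boundary complex of the simplex on vertex set `s`: all nonempty proper subsets. -/
def properFaces (s : Finset ℕ) : Finset (Finset ℕ) :=
  s.powerset.filter fun t => t ≠ ∅ ∧ t ≠ s

/-- All nonempty faces of the simplex on vertex set `s`. -/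
def simplexFaces (s : Finset ℕ) : Finset (Finset ℕ) :=
  s.powerset.filter fun t => t ≠ ∅

/-- Operation (A): a bistellar 2-move on an edge `uv` with `lk(uv) = ∂(abc)`, `abc ∉ K`. -/
def BistellarTwoMove (K K' : SComplex) : Prop :=
  ∃ u v a b c : ℕ,
    ({u, v} : Finset ℕ) ∈ K.faces ∧ u ≠ v ∧
    ({a, b, c} : Finset ℕ).card = 3 ∧
    u ∉ ({a, b, c} : Finset ℕ) ∧ v ∉ ({a, b, c} : Finset ℕ) ∧
    (K.lk {u, v}).faces = properFaces {a, b, c} ∧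
    ({a, b, c} : Finset ℕ) ∉ K.faces ∧
    K'.faces = ((K.faces.filter fun α => ¬ ({u, v} : Finset ℕ) ⊆ α) ∪
      simplexFaces (insert u {a, b, c})) ∪ simplexFaces (insert v {a, b, c})

/-- The faces of the boundary complex of a pure `d`-dimensional complex with face set `F`:
faces contained in some `(d-1)`-face lying in exactly one facet. -/
def bdryFaces (F : Finset (Finset ℕ)) (d : ℕ) : Finset (Finset ℕ) :=
  F.filter fun s => ∃ r ∈ F, s ⊆ r ∧ r.card = d ∧
    (F.filter fun t => t.card = d + 1 ∧ r ⊆ t).card = 1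

/-- The faces of the cone with apex `w` over the complex with face set `F`. -/
def coneFaces (w : ℕ) (F : Finset (Finset ℕ)) : Finset (Finset ℕ) :=
  (F ∪ F.image (insert w)) ∪ {{w}}

/-- `K₁` is obtained from the normal `d`-pseudomanifold `K` by contracting the
edge `uv` (satisfying the link condition): delete all faces containing `u` or `v`
and cone off the boundary of the result with a new vertex `w`. -/
def EdgeContractionAt (d : ℕ) (K : SComplex) (u v : ℕ) (K₁ : SComplex) : Prop :=
  ({u, v} : Finset ℕ) ∈ K.faces ∧ u ≠ v ∧
  (K.lk {u}).faces ∩ (K.lk {v}).faces = (K.lk {u, v}).faces ∧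
  ∃ w, w ∉ K.vertexSet ∧
    K₁.faces = (K.faces.filter fun α => u ∉ α ∧ v ∉ α) ∪
      coneFaces w (bdryFaces (K.faces.filter fun α => u ∉ α ∧ v ∉ α) d)

/-- Operation (B): an edge contraction in a 3-dimensional complex. -/
def EdgeContraction (K K₁ : SComplex) : Prop := ∃ u v, EdgeContractionAt 3 K u v K₁

/-- The class `R`: normal 3-pseudomanifolds with one or two singular vertices such that
(i) if `K` contains the boundary of a 3-simplex then it contains the 3-simplex and
(ii) no normal 3-pseudomanifold with smaller `g₂` is obtained from `K` by a
bistellar 2-move, an edge contraction, an edge expansion followed by a bistellar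
2-move, or an edge expansion followed by an edge contraction. -/
def InClassR (K : SComplex) : Prop :=
  K.IsNormalPseudomanifold 3 ∧
  1 ≤ {v | K.IsSingular v}.ncard ∧ {v | K.IsSingular v}.ncard ≤ 2 ∧
  (∀ s : Finset ℕ, s.card = 4 → (∀ t ∈ properFaces s, t ∈ K.faces) → s ∈ K.faces) ∧
  (∀ K' : SComplex, K'.IsNormalPseudomanifold 3 →
    (BistellarTwoMove K K' ∨ EdgeContraction K K' ∨
      (∃ M, EdgeContraction M K ∧ BistellarTwoMove M K') ∨
      (∃ M, EdgeContraction M K ∧ EdgeContraction M K')) →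
    K.g2 ≤ K'.g2)




theorem mem_lk (K : SComplex) (σ γ : Finset ℕ) :
    γ ∈ (K.lk σ).faces ↔ γ ∈ K.faces ∧ γ ∩ σ = ∅ ∧ γ ∪ σ ∈ K.faces := by
  simp [lk]

/-- Adjacency (or equality) of two 3-simplices in the star of `s`. -/
def Adj3 (K : SComplex) (s φ ψ : Finset ℕ) : Prop :=
  φ ∈ K.faces ∧ ψ ∈ K.faces ∧ φ.card = 4 ∧ ψ.card = 4 ∧ s ⊆ φ ∧ s ⊆ ψ ∧ 3 ≤ (φ ∩ ψ).card

/-- A reformulation of being a normal 3-pseudomanifold. -/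
structure Good (K : SComplex) : Prop where
  ne : K.faces.Nonempty
  pure : ∀ s ∈ K.faces, ∃ φ ∈ K.faces, s ⊆ φ ∧ φ.card = 4
  ridge : ∀ r ∈ K.faces, r.card = 3 → ∃ p q, p ≠ q ∧ p ∉ r ∧ q ∉ r ∧
    ∀ v, v ∉ r → (insert v r ∈ K.faces ↔ v = p ∨ v = q)
  conn : ∀ s φ ψ, φ ∈ K.faces → ψ ∈ K.faces → φ.card = 4 → ψ.card = 4 → s ⊆ φ → s ⊆ ψ →
    Relation.ReflTransGen (K.Adj3 s) φ ψ

theorem Good.card_le {K : SComplex} (h : Good K) {s : Finset ℕ} (hs : s ∈ K.faces) :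
    s.card ≤ 4 := by
  obtain ⟨φ, _, h1, h2⟩ := h.pure s hs
  exact h2 ▸ Finset.card_le_card h1

theorem Adj3.mono {K : SComplex} {s s' φ ψ : Finset ℕ} (h : s ⊆ s')
    (h1 : Relation.ReflTransGen (K.Adj3 s') φ ψ) : Relation.ReflTransGen (K.Adj3 s) φ ψ := by
  refine Relation.ReflTransGen.mono ?_ _ _ h1
  rintro a b ⟨h1, h2, h3, h4, h5, h6, h7⟩
  exact ⟨h1, h2, h3, h4, h.trans h5, h.trans h6, h7⟩

theorem ridge_iff (K : SComplex) (r : Finset ℕ) (hr3 : r.card = 3) :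
    (K.faces.filter fun F => F.card = 3 + 1 ∧ r ⊆ F).card = 2 ↔
    ∃ p q, p ≠ q ∧ p ∉ r ∧ q ∉ r ∧ ∀ v, v ∉ r → (insert v r ∈ K.faces ↔ v = p ∨ v = q) := by
  have key : ∀ F, (F.card = 3 + 1 ∧ r ⊆ F) → ∃ v, v ∉ r ∧ insert v r = F := by
    rintro F ⟨h1, h2⟩
    have : (F \ r).card = 1 := by rw [Finset.card_sdiff_of_subset h2]; omega
    obtain ⟨v, hv⟩ := Finset.card_eq_one.mp this
    have hv' : v ∈ F \ r := by rw [hv]; simp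
    refine ⟨v, (Finset.mem_sdiff.mp hv').2, ?_⟩
    ext x
    have : x ∈ F \ r ↔ x = v := by rw [hv]; simp
    have := @h2 x
    grind
  have inj : ∀ {v v'}, v ∉ r → insert v r = insert v' r → v = v' := by
    intro v v' h1 h2
    have : v ∈ insert v' r := by rw [← h2]; simp
    grind
  constructor
  · intro h
    obtain ⟨P, Q, hPQ, he⟩ := Finset.card_eq_two.mp h
    have hP : P ∈ K.faces.filter fun F => F.card = 3 + 1 ∧ r ⊆ F := by rw [he]; simp
    have hQ : Q ∈ K.faces.filter fun F => F.card = 3 + 1 ∧ r ⊆ F := by rw [he]; simp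
    rw [Finset.mem_filter] at hP hQ
    obtain ⟨p, hp, rfl⟩ := key P hP.2
    obtain ⟨q, hq, rfl⟩ := key Q hQ.2
    refine ⟨p, q, by rintro rfl; exact hPQ rfl, hp, hq, ?_⟩
    intro v hv
    constructor
    · intro hvK
      have : insert v r ∈ K.faces.filter fun F => F.card = 3 + 1 ∧ r ⊆ F := by
        rw [Finset.mem_filter]
        exact ⟨hvK, by rw [Finset.card_insert_of_notMem hv, hr3], Finset.subset_insert _ _⟩
      rw [he] at this
      simp only [Finset.mem_insert, Finset.mem_singleton] at this
      exact this.imp (inj hv) (inj hv)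
    · rintro (rfl | rfl)
      · exact hP.1
      · exact hQ.1
  · rintro ⟨p, q, hpq, hp, hq, h⟩
    have : (K.faces.filter fun F => F.card = 3 + 1 ∧ r ⊆ F) = {insert p r, insert q r} := by
      ext F
      simp only [Finset.mem_filter, Finset.mem_insert, Finset.mem_singleton]
      constructor
      · rintro ⟨h1, h2⟩
        obtain ⟨v, hv, rfl⟩ := key F h2
        rcases (h v hv).mp h1 with rfl | rfl <;> simp
      · rintro (rfl | rfl)
        · exact ⟨(h _ hp).mpr (by simp),
            by rw [Finset.card_insert_of_notMem hp, hr3], Finset.subset_insert _ _⟩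
        · exact ⟨(h _ hq).mpr (by simp),
            by rw [Finset.card_insert_of_notMem hq, hr3], Finset.subset_insert _ _⟩
    rw [this, Finset.card_pair]
    intro he
    exact hpq (inj hp he)

theorem good_of_normal {K : SComplex} (h : K.IsNormalPseudomanifold 3) : Good K := by
  obtain ⟨⟨hne, hp⟩, hsc, hr, hl⟩ := h
  have pure : ∀ s ∈ K.faces, ∃ φ ∈ K.faces, s ⊆ φ ∧ φ.card = 4 := by
    intro s hs
    obtain ⟨φ, h1, h2⟩ := Finset.exists_le_maximal K.faces hs
    refine ⟨φ, h2.1, h1, hp φ ⟨h2.1, fun t ht hst => ?_⟩⟩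
    exact Finset.Subset.antisymm hst (h2.2 ht hst)
  have facet : ∀ φ ∈ K.faces, φ.card = 4 → K.IsFacet φ := by
    intro φ h1 h2
    refine ⟨h1, fun t ht hst => ?_⟩
    obtain ⟨χ, _, h4, h5⟩ := pure t ht
    have := Finset.card_le_card h4
    exact Finset.eq_of_subset_of_card_le hst (by omega)
  have conn3 : ∀ s φ ψ, 3 ≤ s.card → φ ∈ K.faces → ψ ∈ K.faces → φ.card = 4 → ψ.card = 4 →
      s ⊆ φ → s ⊆ ψ → Relation.ReflTransGen (K.Adj3 s) φ ψ := by
    intro s φ ψ h3 h1 h2 h4 h5 h6 h7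
    exact Relation.ReflTransGen.single ⟨h1, h2, h4, h5, h6, h7,
      h3.trans (Finset.card_le_card (Finset.subset_inter h6 h7))⟩
  have step : ∀ s ∈ K.faces, s.card ≤ 2 →
      (∀ v, v ∉ s → ∀ φ ψ, φ ∈ K.faces → ψ ∈ K.faces → φ.card = 4 → ψ.card = 4 →
        insert v s ⊆ φ → insert v s ⊆ ψ → Relation.ReflTransGen (K.Adj3 (insert v s)) φ ψ) →
      ∀ φ ψ, φ ∈ K.faces → ψ ∈ K.faces → φ.card = 4 → ψ.card = 4 → s ⊆ φ → s ⊆ ψ →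
        Relation.ReflTransGen (K.Adj3 s) φ ψ := by
    intro s hs hs2 IH φ ψ h1 h2 h4 h5 h6 h7
    have ex : ∀ χ : Finset ℕ, χ ∈ K.faces → χ.card = 4 → s ⊆ χ →
        ∃ x ∈ χ, x ∉ s ∧ ({x} : Finset ℕ) ∈ (K.lk s).faces := by
      intro χ g1 g2 g3
      obtain ⟨x, hx, hxs⟩ := Finset.exists_mem_notMem_of_card_lt_card (s := s) (t := χ) (by omega)
      refine ⟨x, hx, hxs, ?_⟩
      rw [mem_lk]
      refine ⟨K.down_closed χ g1 _ (by simpa using hx) (by simp), by simp [hxs], ?_⟩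
      refine K.down_closed χ g1 _ (Finset.union_subset (by simpa using hx) g3) ?_
      simp
    obtain ⟨x, hx, hxs, hxl⟩ := ex φ h1 h4 h6
    obtain ⟨y, hy, hys, hyl⟩ := ex ψ h2 h5 h7
    have path := (hl s hs (by omega)).2 x y hxl hyl
    clear hyl ex
    have : ∀ z, Relation.ReflTransGen (K.lk s).VertAdj x z → z ∉ s → ∀ ψ ∈ K.faces, ψ.card = 4 →
        s ⊆ ψ → z ∈ ψ → Relation.ReflTransGen (K.Adj3 s) φ ψ := by
      intro z hz
      induction hz with
      | refl =>
        intro hzs ψ g1 g2 g3 g4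
        exact Adj3.mono (Finset.subset_insert x s) (IH x hxs φ ψ h1 g1 h4 g2
          (Finset.insert_subset hx h6) (Finset.insert_subset g4 g3))
      | @tail y' z' _ hyz ih =>
        intro hzs ψ g1 g2 g3 g4
        rw [VertAdj, mem_lk] at hyz
        obtain ⟨k1, k2, k3⟩ := hyz
        have hy's : y' ∉ s := by
          intro hh
          have : y' ∈ ({y', z'} : Finset ℕ) ∩ s := by simp [hh]
          rw [k2] at this
          simp at this
        obtain ⟨χ, c1, c2, c3⟩ := pure _ k3
        have c4 := (Finset.union_subset_iff.mp c2).2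
        have c5 := (Finset.union_subset_iff.mp c2).1
        have a1 := ih hy's χ c1 c3 c4 (c5 (by simp))
        have a2 := IH z' hzs χ ψ c1 g1 c3 g2 (Finset.insert_subset (c5 (by simp)) c4)
          (Finset.insert_subset g4 g3)
        exact a1.trans (Adj3.mono (Finset.subset_insert _ _) a2)
    exact this y path hys ψ h2 h5 h7 hy
  have conn2 : ∀ s φ ψ, 2 ≤ s.card → φ ∈ K.faces → ψ ∈ K.faces → φ.card = 4 → ψ.card = 4 →
      s ⊆ φ → s ⊆ ψ → Relation.ReflTransGen (K.Adj3 s) φ ψ := by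
    intro s φ ψ h3 h1 h2 h4 h5 h6 h7
    by_cases hc : 3 ≤ s.card
    · exact conn3 s φ ψ hc h1 h2 h4 h5 h6 h7
    refine step s (K.down_closed φ h1 s h6 ?_) (by omega) ?_ φ ψ h1 h2 h4 h5 h6 h7
    · rintro rfl; simp at h3
    intro v hv φ ψ h1 h2 h4 h5 h6 h7
    exact conn3 _ φ ψ (by rw [Finset.card_insert_of_notMem hv]; omega) h1 h2 h4 h5 h6 h7
  have conn1 : ∀ s φ ψ, 1 ≤ s.card → φ ∈ K.faces → ψ ∈ K.faces → φ.card = 4 → ψ.card = 4 →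
      s ⊆ φ → s ⊆ ψ → Relation.ReflTransGen (K.Adj3 s) φ ψ := by
    intro s φ ψ h3 h1 h2 h4 h5 h6 h7
    by_cases hc : 2 ≤ s.card
    · exact conn2 s φ ψ hc h1 h2 h4 h5 h6 h7
    refine step s (K.down_closed φ h1 s h6 ?_) (by omega) ?_ φ ψ h1 h2 h4 h5 h6 h7
    · rintro rfl; simp at h3
    intro v hv φ ψ h1 h2 h4 h5 h6 h7
    exact conn2 _ φ ψ (by rw [Finset.card_insert_of_notMem hv]; omega) h1 h2 h4 h5 h6 h7
  refine ⟨hne, pure, fun r hr1 hr2 => (ridge_iff K r hr2).mp (hr r hr1 hr2), ?_⟩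
  intro s φ ψ h1 h2 h4 h5 h6 h7
  by_cases hc : 1 ≤ s.card
  · exact conn1 s φ ψ hc h1 h2 h4 h5 h6 h7
  have hs0 : s = ∅ := Finset.card_eq_zero.mp (by omega)
  subst hs0
  refine Relation.ReflTransGen.mono ?_ _ _ (hsc φ ψ (facet φ h1 h4) (facet ψ h2 h5))
  rintro a b ⟨g1, g2, g3⟩
  have := hp a g1
  exact ⟨g1.1, g2.1, hp a g1, hp b g2, by simp, by simp, by omega⟩

theorem Good.normal {K : SComplex} (h : Good K) : K.IsNormalPseudomanifold 3 := by
  have facet : ∀ φ ∈ K.faces, φ.card = 4 → K.IsFacet φ := by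
    intro φ h1 h2
    refine ⟨h1, fun t ht hst => ?_⟩
    have := h.card_le ht
    exact Finset.eq_of_subset_of_card_le hst (by omega)
  have facet4 : ∀ φ, K.IsFacet φ → φ.card = 4 := by
    intro φ hφ
    obtain ⟨χ, h3, h4, h5⟩ := h.pure φ hφ.1
    rw [hφ.2 χ h3 h4, h5]
  refine ⟨⟨h.ne, facet4⟩, ?_, fun s hs hs3 => (ridge_iff K s hs3).mpr (h.ridge s hs hs3), ?_⟩
  · intro s t hs ht
    have := h.conn ∅ s t hs.1 ht.1 (facet4 s hs) (facet4 t ht) (by simp) (by simp)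
    clear ht
    induction this with
    | refl => exact Relation.ReflTransGen.refl
    | @tail b c _ hbc ih =>
      obtain ⟨h1, h2, h3, h4, _, _, h7⟩ := hbc
      by_cases hb : b = c
      · exact hb ▸ ih
      refine ih.tail ⟨facet b h1 h3, facet c h2 h4, ?_⟩
      have h8 : (b ∩ c).card ≤ b.card := Finset.card_le_card Finset.inter_subset_left
      have h9 : (b ∩ c).card ≠ 4 := by
        intro h9
        have e1 := Finset.eq_of_subset_of_card_le (Finset.inter_subset_left (s₁ := b) (s₂ := c))
          (by omega)
        have e2 := Finset.eq_of_subset_of_card_le (Finset.inter_subset_right (s₁ := b) (s₂ := c))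
          (by omega)
        exact hb (e1.symm.trans e2)
      omega
  · intro s hs hs2
    have hs2 : s.card ≤ 2 := by omega
    have lkmem : ∀ φ ∈ K.faces, s ⊆ φ → ∀ x y, x ∈ φ → y ∈ φ → x ∉ s → y ∉ s →
        ({x, y} : Finset ℕ) ∈ (K.lk s).faces := by
      intro φ h1 h2 x y hx hy hxs hys
      have hxy : ({x, y} : Finset ℕ) ⊆ φ := by
        intro z hz
        simp only [Finset.mem_insert, Finset.mem_singleton] at hz
        rcases hz with rfl | rfl <;> assumption
      rw [mem_lk]
      refine ⟨K.down_closed φ h1 _ hxy (by simp), ?_, 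
        K.down_closed φ h1 _ (Finset.union_subset hxy h2) (by simp)⟩
      ext z
      simp only [Finset.mem_inter, Finset.mem_insert, Finset.mem_singleton, Finset.notMem_empty,
        iff_false]
      rintro ⟨rfl | rfl, h⟩ <;> contradiction
    constructor
    · obtain ⟨φ, h1, h2, h3⟩ := h.pure s hs
      obtain ⟨x, hx, hxs⟩ := Finset.exists_mem_notMem_of_card_lt_card (s := s) (t := φ) (by omega)
      exact ⟨_, lkmem φ h1 h2 x x hx hx hxs hxs⟩
    · intro u v hu hv
      rw [mem_lk] at hu hv
      obtain ⟨_, hu1, hu2⟩ := hu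
      obtain ⟨_, hv1, hv2⟩ := hv
      have hus : u ∉ s := by
        intro hh
        have : u ∈ ({u} : Finset ℕ) ∩ s := by simp [hh]
        rw [hu1] at this
        simp at this
      have hvs : v ∉ s := by
        intro hh
        have : v ∈ ({v} : Finset ℕ) ∩ s := by simp [hh]
        rw [hv1] at this
        simp at this
      obtain ⟨φ, a1, a2, a3⟩ := h.pure _ hu2
      obtain ⟨ψ, b1, b2, b3⟩ := h.pure _ hv2
      rw [Finset.union_subset_iff, Finset.singleton_subset_iff] at a2 b2
      have path := h.conn s φ ψ a1 b1 a3 b3 a2.2 b2.2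
      have : ∀ χ, Relation.ReflTransGen (K.Adj3 s) φ χ → χ ∈ K.faces → s ⊆ χ →
          ∀ y ∈ χ, y ∉ s → Relation.ReflTransGen (K.lk s).VertAdj u y := by
        intro χ hχ
        induction hχ with
        | refl =>
          intro _ _ y hy hys
          exact Relation.ReflTransGen.single (lkmem φ a1 a2.2 u y a2.1 hy hus hys)
        | @tail χ χ' _ hχ ih =>
          intro _ _ y hy hys
          obtain ⟨h1, h2, h3, h4, h5, h6, h7⟩ := hχ
          obtain ⟨z, hz, hzs⟩ := Finset.exists_mem_notMem_of_card_lt_card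
            (s := s) (t := χ ∩ χ') (by omega)
          rw [Finset.mem_inter] at hz
          exact (ih h1 h5 z hz.1 hzs).tail (lkmem χ' h2 h6 z y hz.2 hy hzs hys)
      exact this ψ path b1 b2.2 v b2.1 hvs


/-- The vertex map identifying `a` and `b` with `c`. -/
def cmap (a b c v : ℕ) : ℕ := if v = a ∨ v = b then c else v

/-- The image of a complex under `cmap`. -/
def contr (M : SComplex) (a b c : ℕ) : SComplex where
  faces := M.faces.image fun σ => σ.image (cmap a b c)
  not_empty_mem := by
    intro h
    obtain ⟨σ, h1, h2⟩ := Finset.mem_image.mp h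
    rw [Finset.image_eq_empty] at h2
    exact M.not_empty_mem (h2 ▸ h1)
  down_closed := by
    intro s hs t hts ht
    obtain ⟨σ, h1, rfl⟩ := Finset.mem_image.mp hs
    have e : (σ.filter fun v => cmap a b c v ∈ t).image (cmap a b c) = t := by
      ext x
      simp only [Finset.mem_image, Finset.mem_filter]
      constructor
      · rintro ⟨v, ⟨_, h⟩, rfl⟩
        exact h
      · intro hx
        obtain ⟨v, hv, rfl⟩ := Finset.mem_image.mp (hts hx)
        exact ⟨v, ⟨hv, hx⟩, rfl⟩
    refine Finset.mem_image.mpr ⟨_, M.down_closed σ h1 _ (Finset.filter_subset _ _) ?_, e⟩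
    intro h
    rw [h] at e
    exact ht (by simpa using e.symm)

/-- The hypotheses for contracting `ab` to `c`. -/
structure CD (M : SComplex) (a b c : ℕ) : Prop where
  ab : a ≠ b
  mem : ({a, b} : Finset ℕ) ∈ M.faces
  fresh : ∀ σ ∈ M.faces, c ∉ σ
  link : ∀ γ : Finset ℕ, a ∉ γ → b ∉ γ → insert a γ ∈ M.faces → insert b γ ∈ M.faces →
    insert a (insert b γ) ∈ M.faces

theorem mem_image_cmap (a b c : ℕ) (σ : Finset ℕ) (v : ℕ) :
    v ∈ σ.image (cmap a b c) ↔ (v = c ∧ (a ∈ σ ∨ b ∈ σ)) ∨ (v ∈ σ ∧ v ≠ a ∧ v ≠ b) := by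
  simp only [Finset.mem_image, cmap]
  constructor
  · rintro ⟨x, hx, rfl⟩
    split_ifs <;> grind
  · rintro (⟨rfl, h | h⟩ | h)
    · exact ⟨a, h, by simp⟩
    · exact ⟨b, h, by simp⟩
    · exact ⟨v, h.1, by simp [h.2]⟩

theorem CD.ac {M : SComplex} {a b c : ℕ} (h : CD M a b c) : a ≠ c := by
  have := h.fresh _ h.mem
  grind

theorem CD.bc {M : SComplex} {a b c : ℕ} (h : CD M a b c) : b ≠ c := by
  have := h.fresh _ h.mem
  grind

theorem CD.symm {M : SComplex} {a b c : ℕ} (h : CD M a b c) : CD M b a c := by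
  refine ⟨h.ab.symm, Finset.pair_comm a b ▸ h.mem, h.fresh, ?_⟩
  intro γ h1 h2 h3 h4
  rw [Finset.insert_comm]
  exact h.link γ h2 h1 h4 h3

theorem contr_mem {M : SComplex} {a b c : ℕ} {σ : Finset ℕ} (h : σ ∈ M.faces) :
    σ.image (cmap a b c) ∈ (M.contr a b c).faces :=
  Finset.mem_image.mpr ⟨σ, h, rfl⟩

theorem contr_mem1 {M : SComplex} {a b c : ℕ} (h : CD M a b c) {τ : Finset ℕ} (hc : c ∉ τ) :
    τ ∈ (M.contr a b c).faces ↔ τ ∈ M.faces ∧ a ∉ τ ∧ b ∉ τ := by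
  have := h.ac
  have := h.bc
  constructor
  · intro hτ
    obtain ⟨σ, h1, h2⟩ := Finset.mem_image.mp hτ
    have key : ∀ v, v ∈ τ ↔ (v = c ∧ (a ∈ σ ∨ b ∈ σ)) ∨ (v ∈ σ ∧ v ≠ a ∧ v ≠ b) := by
      intro v; rw [← h2]; exact mem_image_cmap a b c σ v
    have : τ = σ := by
      ext v
      have := key v
      have := key c
      grind
    subst this
    have := key a
    have := key b
    grind
  · rintro ⟨h1, h2, h3⟩
    refine Finset.mem_image.mpr ⟨τ, h1, ?_⟩
    ext v
    rw [mem_image_cmap]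
    grind

theorem contr_mem2 {M : SComplex} {a b c : ℕ} (h : CD M a b c) {τ : Finset ℕ} (hc : c ∉ τ) :
    insert c τ ∈ (M.contr a b c).faces ↔
      a ∉ τ ∧ b ∉ τ ∧ (insert a τ ∈ M.faces ∨ insert b τ ∈ M.faces) := by
  have := h.ac
  have := h.bc
  constructor
  · intro hτ
    obtain ⟨σ, h1, h2⟩ := Finset.mem_image.mp hτ
    have key : ∀ v, v ∈ insert c τ ↔
        (v = c ∧ (a ∈ σ ∨ b ∈ σ)) ∨ (v ∈ σ ∧ v ≠ a ∧ v ≠ b) := by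
      intro v; rw [← h2]; exact mem_image_cmap a b c σ v
    have ka := key a
    have kb := key b
    have kc := key c
    have hf := h.fresh σ h1
    refine ⟨by grind, by grind, ?_⟩
    have : a ∈ σ ∨ b ∈ σ := by grind
    refine this.imp ?_ ?_
    · intro ha
      refine M.down_closed σ h1 _ ?_ (by simp)
      intro v hv
      have := key v
      grind
    · intro ha
      refine M.down_closed σ h1 _ ?_ (by simp)
      intro v hv
      have := key v
      grind
  · rintro ⟨h2, h3, h1 | h1⟩
    · refine Finset.mem_image.mpr ⟨_, h1, ?_⟩
      ext v
      rw [mem_image_cmap]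
      grind
    · refine Finset.mem_image.mpr ⟨_, h1, ?_⟩
      ext v
      rw [mem_image_cmap]
      grind

/-- No component of a finite graph has exactly one vertex of degree one,
all others having degree two. -/
theorem parity (C : Finset ℕ) (R : ℕ → ℕ → Prop) (hsymm : ∀ p q, R p q → R q p)
    (hirr : ∀ p, ¬ R p p) (hC : ∀ p ∈ C, ∀ q, R p q → q ∈ C) (y : ℕ) (hy : y ∈ C)
    (h1 : ∃ q0, ∀ q, R y q ↔ q = q0)
    (h2 : ∀ p ∈ C, p ≠ y → ∃ q1 q2, q1 ≠ q2 ∧ ∀ q, R p q ↔ q = q1 ∨ q = q2) : False := by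
  classical
  let G : SimpleGraph C :=
    { Adj := fun p q => R p q
      symm := ⟨fun p q h => hsymm p q h⟩
      loopless := ⟨fun p => hirr p⟩ }
  have d1 : G.degree ⟨y, hy⟩ = 1 := by
    obtain ⟨q0, hq⟩ := h1
    have hq0 : q0 ∈ C := hC y hy q0 ((hq q0).mpr rfl)
    rw [← SimpleGraph.card_neighborFinset_eq_degree, Finset.card_eq_one]
    refine ⟨⟨q0, hq0⟩, ?_⟩
    ext q
    rw [SimpleGraph.mem_neighborFinset, Finset.mem_singleton, Subtype.ext_iff]
    exact hq q
  obtain ⟨p, hp, hodd⟩ := G.exists_ne_odd_degree_of_exists_odd_degree ⟨y, hy⟩ (by rw [d1]; simp)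
  obtain ⟨q1, q2, h12, hq⟩ := h2 p p.2 (fun h => hp (Subtype.ext h))
  have m1 : q1 ∈ C := hC p p.2 q1 ((hq q1).mpr (Or.inl rfl))
  have m2 : q2 ∈ C := hC p p.2 q2 ((hq q2).mpr (Or.inr rfl))
  have d2 : G.degree p = 2 := by
    rw [← SimpleGraph.card_neighborFinset_eq_degree, Finset.card_eq_two]
    refine ⟨⟨q1, m1⟩, ⟨q2, m2⟩, fun h => h12 (by simpa using h), ?_⟩
    ext q
    rw [SimpleGraph.mem_neighborFinset, Finset.mem_insert, Finset.mem_singleton, Subtype.ext_iff,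
      Subtype.ext_iff]
    exact hq q
  rw [d2] at hodd
  exact absurd hodd (by decide)

theorem contr_pure {M : SComplex} {a b c : ℕ} (hM : Good M) (h : CD M a b c) :
    ∀ s ∈ (M.contr a b c).faces, ∃ φ ∈ (M.contr a b c).faces, s ⊆ φ ∧ φ.card = 4 := by
  have hac := h.ac
  have hbc := h.bc
  have hab := h.ab
  have nc : ∀ φ ∈ M.faces, φ.card = 4 → ¬ (a ∈ φ ∧ b ∈ φ) →
      (φ.image (cmap a b c)).card = 4 := by
    intro φ h1 h2 h3
    rw [Finset.card_image_of_injOn, h2]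
    have := h.fresh φ h1
    intro x hx y hy hxy
    have hx' : x ∈ φ := hx
    have hy' : y ∈ φ := hy
    simp only [cmap] at hxy
    split_ifs at hxy <;> grind
  intro s hs
  obtain ⟨σ, h1, rfl⟩ := Finset.mem_image.mp hs
  obtain ⟨φ, h2, h3, h4⟩ := hM.pure σ h1
  by_cases hcol : a ∈ φ ∧ b ∈ φ
  · have hr : (φ.erase b).card = 3 := by rw [Finset.card_erase_of_mem hcol.2, h4]
    have hrm : φ.erase b ∈ M.faces := M.down_closed φ h2 _ (Finset.erase_subset _ _)
      (by intro e; rw [e] at hr; simp at hr)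
    obtain ⟨p, q, hpq, hp, hq, hpq2⟩ := hM.ridge _ hrm hr
    have ex : ∃ p, p ∉ φ.erase b ∧ p ≠ b ∧ insert p (φ.erase b) ∈ M.faces := by
      by_cases hpb : p = b
      · exact ⟨q, hq, by rw [← hpb]; exact hpq.symm, (hpq2 q hq).mpr (Or.inr rfl)⟩
      · exact ⟨p, hp, hpb, (hpq2 p hp).mpr (Or.inl rfl)⟩
    obtain ⟨p, hp, hpb, hpm⟩ := ex
    refine ⟨_, contr_mem hpm, ?_, nc _ hpm (by rw [Finset.card_insert_of_notMem hp, hr]) ?_⟩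
    · intro v hv
      rw [mem_image_cmap] at hv ⊢
      have := @h3 v
      grind
    · grind
  · exact ⟨_, contr_mem h2, Finset.image_subset_image h3, nc φ h2 h4 hcol⟩

theorem contr_ridge {M : SComplex} {a b c : ℕ} (hM : Good M) (h : CD M a b c) :
    ∀ r ∈ (M.contr a b c).faces, r.card = 3 → ∃ p q, p ≠ q ∧ p ∉ r ∧ q ∉ r ∧
    ∀ v, v ∉ r → (insert v r ∈ (M.contr a b c).faces ↔ v = p ∨ v = q) := by
  have hac := h.ac
  have hbc := h.bc
  have hab := h.ab
  have no5 : ∀ γ : Finset ℕ, γ.card = 3 → a ∉ γ → b ∉ γ → insert a γ ∈ M.faces →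
      insert b γ ∈ M.faces → False := by
    intro γ h1 h2 h3 h4 h5
    have := hM.card_le (h.link γ h2 h3 h4 h5)
    rw [Finset.card_insert_of_notMem (by grind), Finset.card_insert_of_notMem h3] at this
    omega
  intro r hr hr3
  by_cases hc : c ∈ r
  · obtain ⟨τ, hτ, rfl⟩ : ∃ τ, c ∉ τ ∧ insert c τ = r :=
      ⟨r.erase c, by simp, Finset.insert_erase hc⟩
    have hτ2 : τ.card = 2 := by rw [Finset.card_insert_of_notMem hτ] at hr3; omega
    rw [contr_mem2 h hτ] at hr
    obtain ⟨ha, hb, hr⟩ := hr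
    have iff1 : ∀ v, v ∉ insert c τ → (insert v (insert c τ) ∈ (M.contr a b c).faces ↔
        v ≠ a ∧ v ≠ b ∧ (insert v (insert a τ) ∈ M.faces ∨ insert v (insert b τ) ∈ M.faces)) := by
      intro v hv
      rw [Finset.insert_comm, contr_mem2 h (by grind), Finset.insert_comm a, Finset.insert_comm b]
      grind
    have rig : ∀ a, a ∉ τ → insert a τ ∈ M.faces → ∃ p q, p ≠ q ∧ p ∉ insert a τ ∧ q ∉ insert a τ ∧
        p ≠ c ∧ q ≠ c ∧
        ∀ v, v ∉ insert a τ → (insert v (insert a τ) ∈ M.faces ↔ v = p ∨ v = q) := by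
      intro a ha hm
      obtain ⟨p, q, h1, h2, h3, h4⟩ := hM.ridge _ hm (by rw [Finset.card_insert_of_notMem ha, hτ2])
      refine ⟨p, q, h1, h2, h3, ?_, ?_, h4⟩
      · have := h.fresh _ ((h4 p h2).mpr (Or.inl rfl))
        grind
      · have := h.fresh _ ((h4 q h3).mpr (Or.inr rfl))
        grind
    by_cases hboth : insert a τ ∈ M.faces ∧ insert b τ ∈ M.faces
    · have habτ := h.link τ ha hb hboth.1 hboth.2
      have other : ∀ a b, a ∉ τ → b ∉ τ → a ≠ b → insert a τ ∈ M.faces →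
          insert a (insert b τ) ∈ M.faces → ∃ p, p ∉ insert a τ ∧ p ≠ b ∧ p ≠ c ∧
          ∀ v, v ∉ insert a τ → (insert v (insert a τ) ∈ M.faces ↔ v = b ∨ v = p) := by
        intro a b ha hb hab h1 h2
        obtain ⟨p, q, g1, g2, g3, g4, g5, g6⟩ := rig a ha h1
        rw [Finset.insert_comm] at h2
        rcases (g6 b (by grind)).mp h2 with rfl | rfl
        · exact ⟨q, g3, g1.symm, g5, g6⟩
        · exact ⟨p, g2, g1, g4, fun v hv => (g6 v hv).trans or_comm⟩
      obtain ⟨p, p1, p2, p3, p4⟩ := other a b ha hb hab hboth.1 habτ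
      obtain ⟨q, q1, q2, q3, q4⟩ := other b a hb ha hab.symm hboth.2
        (by rw [Finset.insert_comm]; exact habτ)
      have hpq : p ≠ q := by
        rintro rfl
        refine no5 (insert p τ) ?_ (by grind) (by grind) ?_ ?_
        · rw [Finset.card_insert_of_notMem (by grind), hτ2]
        · rw [Finset.insert_comm]
          exact (p4 p p1).mpr (Or.inr rfl)
        · rw [Finset.insert_comm]
          exact (q4 p q1).mpr (Or.inr rfl)
      refine ⟨p, q, hpq, by grind, by grind, ?_⟩
      intro v hv
      rw [iff1 v hv]
      constructor
      · rintro ⟨v1, v2, v3⟩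
        rw [p4 v (by grind), q4 v (by grind)] at v3
        grind
      · rintro (rfl | rfl)
        · refine ⟨by grind, p2, Or.inl ?_⟩
          rw [p4 v p1]; simp
        · refine ⟨by grind, by grind, Or.inr ?_⟩
          rw [q4 v q1]; simp
    · have one : ∀ a b, a ∉ τ → b ∉ τ → a ≠ b → insert a τ ∈ M.faces → insert b τ ∉ M.faces → 
          ∃ p q, p ≠ q ∧ p ∉ insert c τ ∧ q ∉ insert c τ ∧ ∀ v, v ∉ insert c τ →
          (v ≠ a ∧ v ≠ b ∧ (insert v (insert a τ) ∈ M.faces ∨ insert v (insert b τ) ∈ M.faces) ↔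
            v = p ∨ v = q) := by
        intro a b ha hb hab h1 h2
        obtain ⟨p, q, g1, g2, g3, g4, g5, g6⟩ := rig a ha h1
        refine ⟨p, q, g1, by grind, by grind, ?_⟩
        have nob : ∀ v, insert v (insert b τ) ∉ M.faces := fun v hv =>
          h2 (M.down_closed _ hv _ (Finset.subset_insert _ _) (by simp))
        have nob2 : insert b (insert a τ) ∉ M.faces := by
          rw [Finset.insert_comm]; exact nob a
        intro v hv
        by_cases hva : v = a
        · grind
        have g7 := g6 v (by grind)
        have := nob v
        by_cases hvb : v = b
        · subst hvb
          tauto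
        · tauto
      rcases hr with hr | hr
      · obtain ⟨p, q, g1, g2, g3, g4⟩ := one a b ha hb hab hr (by tauto)
        exact ⟨p, q, g1, g2, g3, fun v hv => (iff1 v hv).trans (g4 v hv)⟩
      · obtain ⟨p, q, g1, g2, g3, g4⟩ := one b a hb ha hab.symm hr (by tauto)
        refine ⟨p, q, g1, g2, g3, fun v hv => (iff1 v hv).trans (Iff.trans ?_ (g4 v hv))⟩
        tauto
  · rw [contr_mem1 h hc] at hr
    obtain ⟨hr, ha, hb⟩ := hr
    obtain ⟨p, q, h1, h2, h3, h4⟩ := hM.ridge _ hr hr3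
    have hp := (h4 p h2).mpr (Or.inl rfl)
    have hq := (h4 q h3).mpr (Or.inr rfl)
    have hpc : p ≠ c := by
      have := h.fresh _ hp
      grind
    have hqc : q ≠ c := by
      have := h.fresh _ hq
      grind
    have hn := no5 r hr3 ha hb
    have h4a := h4 a ha
    have h4b := h4 b hb
    refine ⟨cmap a b c p, cmap a b c q, ?_, ?_, ?_, ?_⟩
    · simp only [cmap]
      split_ifs <;> grind
    · simp only [cmap]
      split_ifs <;> grind
    · simp only [cmap]
      split_ifs <;> grind
    · intro v hv
      by_cases hvc : v = c
      · subst hvc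
        rw [contr_mem2 h hc, h4a, h4b]
        simp only [cmap]
        split_ifs <;> grind
      · rw [contr_mem1 h (by grind), h4 v hv]
        simp only [cmap]
        split_ifs <;> grind


theorem reach_cycle {M : SComplex} (hM : Good M) {a b x y z : ℕ} (hab : a ≠ b) (hxa : x ≠ a)
    (hxb : x ≠ b) (hyz : y ≠ z) (hy : y ∉ ({a, b, x} : Finset ℕ)) (hz : z ∉ ({a, b, x} : Finset ℕ))
    (hyM : insert y {a, b, x} ∈ M.faces) (hzM : insert z {a, b, x} ∈ M.faces) :
    Relation.ReflTransGen (fun p q => p ≠ q ∧ p ∉ ({a, b, x} : Finset ℕ) ∧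
      q ∉ ({a, b, x} : Finset ℕ) ∧ insert q (insert p {a, x}) ∈ M.faces) y z := by
  classical
  set R : ℕ → ℕ → Prop := fun p q => p ≠ q ∧ p ∉ ({a, b, x} : Finset ℕ) ∧
      q ∉ ({a, b, x} : Finset ℕ) ∧ insert q (insert p {a, x}) ∈ M.faces with hR
  by_contra hcon
  have habx : ({a, b, x} : Finset ℕ) ∈ M.faces :=
    M.down_closed _ hyM _ (Finset.subset_insert _ _) (by simp)
  have hbc : ∀ p, p ∉ ({a, b, x} : Finset ℕ) → (insert p {a, b, x} ∈ M.faces ↔ p = y ∨ p = z) := by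
    obtain ⟨p, q, h1, h2, h3, h4⟩ := hM.ridge _ habx (by
      rw [Finset.card_insert_of_notMem (by grind), Finset.card_pair (by grind)])
    have e1 := (h4 y hy).mp hyM
    have e2 := (h4 z hz).mp hzM
    intro v hv
    rw [h4 v hv]
    grind
  have hbp : ∀ p, insert b (insert p {a, x}) = (insert p {a, b, x} : Finset ℕ) := by
    intro p; ext v; simp only [Finset.mem_insert, Finset.mem_singleton]; tauto
  have reach : ∀ p, Relation.ReflTransGen R y p →
      p ∉ ({a, b, x} : Finset ℕ) ∧ insert p {a, x} ∈ M.faces := by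
    intro p hp
    induction hp with
    | refl => exact ⟨hy, M.down_closed _ hyM _ (by intro v; simp; tauto) (by simp)⟩
    | @tail q p _ hqp _ =>
      exact ⟨hqp.2.2.1, M.down_closed _ hqp.2.2.2 _ (by intro v; simp; tauto) (by simp)⟩
  have rid : ∀ p, p ∉ ({a, b, x} : Finset ℕ) → insert p {a, x} ∈ M.faces →
      ∃ p1 p2, p1 ≠ p2 ∧ p1 ∉ insert p ({a, x} : Finset ℕ) ∧ p2 ∉ insert p ({a, x} : Finset ℕ) ∧
      ((p = y ∨ p = z) ↔ (b = p1 ∨ b = p2)) ∧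
      ∀ q, R p q ↔ q ≠ b ∧ (q = p1 ∨ q = p2) := by
    intro p hp hpm
    obtain ⟨p1, p2, h1, h2, h3, h4⟩ := hM.ridge _ hpm (by
      rw [Finset.card_insert_of_notMem (by grind), Finset.card_pair (by grind)])
    refine ⟨p1, p2, h1, h2, h3, ?_, ?_⟩
    · rw [← h4 b (by grind), hbp, hbc p hp]
    · intro q
      constructor
      · rintro ⟨g1, g2, g3, g4⟩
        exact ⟨by grind, (h4 q (by grind)).mp g4⟩
      · rintro ⟨g1, g2⟩
        have g3 : q ∉ insert p ({a, x} : Finset ℕ) := by grind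
        refine ⟨by grind, hp, by grind, (h4 q g3).mpr g2⟩
  refine parity ((M.faces.sup id).filter fun p => Relation.ReflTransGen R y p) R ?_ ?_ ?_ y ?_ ?_ ?_
  · rintro p q ⟨h1, h2, h3, h4⟩
    exact ⟨h1.symm, h3, h2, by rw [Finset.insert_comm]; exact h4⟩
  · intro p hp
    exact hp.1 rfl
  · intro p hp q hq
    rw [Finset.mem_filter] at hp ⊢
    refine ⟨?_, hp.2.tail hq⟩
    rw [Finset.mem_sup]
    exact ⟨_, hq.2.2.2, by simp⟩
  · rw [Finset.mem_filter, Finset.mem_sup]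
    exact ⟨⟨_, hyM, by simp⟩, Relation.ReflTransGen.refl⟩
  · obtain ⟨h1, h2⟩ := reach y Relation.ReflTransGen.refl
    obtain ⟨p1, p2, g1, g2, g3, g4, g5⟩ := rid y h1 h2
    rcases g4.mp (Or.inl rfl) with rfl | rfl
    · exact ⟨p2, fun q => (g5 q).trans (by grind)⟩
    · exact ⟨p1, fun q => (g5 q).trans (by grind)⟩
  · intro p hp hpy
    have hp2 := (Finset.mem_filter.mp hp).2
    obtain ⟨h1, h2⟩ := reach p hp2
    have hpz : p ≠ z := by rintro rfl; exact hcon hp2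
    obtain ⟨p1, p2, g1, g2, g3, g4, g5⟩ := rid p h1 h2
    exact ⟨p1, p2, g1, fun q => (g5 q).trans (by grind)⟩

theorem contr_cycle {M : SComplex} {a b c : ℕ} (hM : Good M) (h : CD M a b c) {x y z : ℕ}
    (hxa : x ≠ a) (hxb : x ≠ b) (hyz : y ≠ z)
    (hy : y ∉ ({a, b, x} : Finset ℕ)) (hz : z ∉ ({a, b, x} : Finset ℕ))
    (hyM : insert y {a, b, x} ∈ M.faces) (hzM : insert z {a, b, x} ∈ M.faces)
    (G H : Finset ℕ) (hG : G ∈ (M.contr a b c).faces) (hH : H ∈ (M.contr a b c).faces)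
    (hG4 : G.card = 4) (hH4 : H.card = 4)
    (hGy : ({c, x, y} : Finset ℕ) ⊆ G) (hHz : ({c, x, z} : Finset ℕ) ⊆ H) :
    Relation.ReflTransGen ((M.contr a b c).Adj3 {c, x}) G H := by
  have hac := h.ac
  have hbc := h.bc
  have hab := h.ab
  have fr := h.fresh
  have path := reach_cycle hM h.ab hxa hxb hyz hy hz hyM hzM
  have hxc : x ≠ c := by have := fr _ hyM; grind
  have hyc : y ≠ c := by have := fr _ hyM; grind
  have key : ∀ p, p ∉ ({a, b, x, c} : Finset ℕ) → ∀ G H : Finset ℕ, G ∈ (M.contr a b c).faces →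
      H ∈ (M.contr a b c).faces → G.card = 4 → H.card = 4 → ({c, x, p} : Finset ℕ) ⊆ G →
      ({c, x, p} : Finset ℕ) ⊆ H → Relation.ReflTransGen ((M.contr a b c).Adj3 {c, x}) G H := by
    intro p hp G H g1 g2 g3 g4 g5 g6
    have h3 : ({c, x, p} : Finset ℕ).card = 3 := by
      rw [Finset.card_insert_of_notMem (by grind), Finset.card_pair (by grind)]
    have hs : ({c, x} : Finset ℕ) ⊆ {c, x, p} := by
      intro v; simp only [Finset.mem_insert, Finset.mem_singleton]; tauto
    exact Relation.ReflTransGen.single ⟨g1, g2, g3, g4, hs.trans g5, hs.trans g6,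
      h3 ▸ Finset.card_le_card (Finset.subset_inter g5 g6)⟩
  clear hzM hz hyz
  induction path generalizing H with
  | refl => exact key y (by grind) G H hG hH hG4 hH4 hGy hHz
  | @tail p q _ hpq ih =>
    obtain ⟨h1, h2, h3, h4⟩ := hpq
    have f4 := fr _ h4
    have hm : insert c (insert q (insert p {x})) ∈ (M.contr a b c).faces := by
      rw [contr_mem2 h (by grind)]
      refine ⟨by grind, by grind, Or.inl ?_⟩
      convert h4 using 1
      ext v; simp only [Finset.mem_insert, Finset.mem_singleton]; tauto
    have hm4 : (insert c (insert q (insert p ({x} : Finset ℕ)))).card = 4 := by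
      rw [Finset.card_insert_of_notMem (by grind), Finset.card_insert_of_notMem (by grind),
        Finset.card_insert_of_notMem (by grind), Finset.card_singleton]
    refine (ih _ hm hm4 ?_).trans (key q (by grind) _ H hm hH hm4 hH4 ?_ hHz)
    · intro v; simp only [Finset.mem_insert, Finset.mem_singleton]; tauto
    · intro v; simp only [Finset.mem_insert, Finset.mem_singleton]; tauto

theorem contr_path {M : SComplex} {a b c : ℕ} (hM : Good M) (h : CD M a b c) (s φ ψ : Finset ℕ)
    (hφ : φ ∈ M.faces) (hφ4 : φ.card = 4) (hs : s ⊆ φ)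
    (hp : Relation.ReflTransGen (M.Adj3 s) φ ψ) (G H : Finset ℕ)
    (hG : G ∈ (M.contr a b c).faces) (hH : H ∈ (M.contr a b c).faces)
    (hG4 : G.card = 4) (hH4 : H.card = 4)
    (hGφ : φ.image (cmap a b c) ⊆ G) (hHψ : ψ.image (cmap a b c) ⊆ H) :
    Relation.ReflTransGen ((M.contr a b c).Adj3 (s.image (cmap a b c))) G H := by
  have hac := h.ac
  have hbc := h.bc
  have hab := h.ab
  have card3 : ∀ φ : Finset ℕ, φ ∈ M.faces → 3 ≤ φ.card → (φ.card = 4 ∨ ¬ (a ∈ φ ∧ b ∈ φ)) →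
      3 ≤ (φ.image (cmap a b c)).card := by
    intro φ h1 h2 h3
    have hf := h.fresh φ h1
    by_cases hb : a ∈ φ ∧ b ∈ φ
    · have h4 : φ.card = 4 := by tauto
      have : φ.erase b ⊆ φ.image (cmap a b c) ∪ {a} := by
        intro v hv
        rw [Finset.mem_union, mem_image_cmap]
        grind
      have h5 : (φ.image (cmap a b c)) = insert c ((φ.erase b).erase a) := by
        ext v
        rw [mem_image_cmap]
        grind
      rw [h5, Finset.card_insert_of_notMem (by grind),
        Finset.card_erase_of_mem (by grind), Finset.card_erase_of_mem hb.2]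
      omega
    · rw [Finset.card_image_of_injOn]
      · exact h2
      intro x hx y hy hxy
      have hx' : x ∈ φ := hx
      have hy' : y ∈ φ := hy
      simp only [cmap] at hxy
      split_ifs at hxy <;> grind
  induction hp generalizing H with
  | refl =>
    have := Finset.image_subset_image (f := cmap a b c) hs
    exact Relation.ReflTransGen.single ⟨hG, hH, hG4, hH4, this.trans hGφ, this.trans hHψ,
      (card3 φ hφ (by omega) (Or.inl hφ4)).trans
      (Finset.card_le_card (Finset.subset_inter hGφ hHψ))⟩
  | @tail χ ψ _ hχψ ih =>
    obtain ⟨h1, h2, h3, h4, h5, h6, h7⟩ := hχψ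
    obtain ⟨H', a1, a2, a3⟩ := contr_pure hM h _ (contr_mem (a := a) (b := b) (c := c) h1)
    have p1 := ih H' a1 a3 a2
    refine p1.trans ?_
    have hin : χ ∩ ψ ∈ M.faces := M.down_closed χ h1 _ Finset.inter_subset_left
      (by intro e; rw [e] at h7; simp at h7)
    have hsin : s ⊆ χ ∩ ψ := Finset.subset_inter h5 h6
    by_cases hcol : (χ ∩ ψ).card = 4 ∨ ¬ (a ∈ χ ∩ ψ ∧ b ∈ χ ∩ ψ)
    · have := card3 _ hin h7 hcol
      have i1 := Finset.image_subset_image (f := cmap a b c)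
        (Finset.inter_subset_left (s₁ := χ) (s₂ := ψ))
      have i2 := Finset.image_subset_image (f := cmap a b c)
        (Finset.inter_subset_right (s₁ := χ) (s₂ := ψ))
      have i3 := Finset.image_subset_image (f := cmap a b c) hsin
      exact Relation.ReflTransGen.single ⟨a1, hH, a3, hH4, (i3.trans i1).trans a2,
        (i3.trans i2).trans hHψ, this.trans (Finset.card_le_card
          (Finset.subset_inter (i1.trans a2) (i2.trans hHψ)))⟩
    · push Not at hcol
      obtain ⟨c4, ca, cb⟩ := hcol
      have l4 : (χ ∩ ψ).card ≤ 4 := h3 ▸ Finset.card_le_card Finset.inter_subset_left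
      have c3 : (χ ∩ ψ).card = 3 := by omega
      have h1x : (((χ ∩ ψ).erase a).erase b).card = 1 := by
        rw [Finset.card_erase_of_mem (by grind), Finset.card_erase_of_mem ca]; omega
      obtain ⟨x, hx⟩ := Finset.card_eq_one.mp h1x
      have ex : χ ∩ ψ = {a, b, x} := by
        ext v
        have : v ∈ ((χ ∩ ψ).erase a).erase b ↔ v = x := by rw [hx]; simp
        grind
      have hxx : x ∈ ((χ ∩ ψ).erase a).erase b := by rw [hx]; simp
      have one : ∀ χ : Finset ℕ, χ.card = 4 → ({a, b, x} : Finset ℕ) ⊆ χ →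
          ∃ y, y ∉ ({a, b, x} : Finset ℕ) ∧ χ = insert y {a, b, x} := by
        intro χ g1 g2
        have : (χ \ {a, b, x}).card = 1 := by
          rw [Finset.card_sdiff_of_subset g2, ← ex, c3, g1]
        obtain ⟨y, hy⟩ := Finset.card_eq_one.mp this
        have hy' : y ∈ χ \ {a, b, x} := by rw [hy]; simp
        refine ⟨y, (Finset.mem_sdiff.mp hy').2, ?_⟩
        ext v
        have : v ∈ χ \ {a, b, x} ↔ v = y := by rw [hy]; simp
        have := @g2 v
        grind
      obtain ⟨y, hy, ey⟩ := one χ h3 (ex ▸ Finset.inter_subset_left)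
      obtain ⟨z, hz, ez⟩ := one ψ h4 (ex ▸ Finset.inter_subset_right)
      have hyz : y ≠ z := by
        rintro rfl
        rw [ey, ez, Finset.inter_self, ← ey] at c3
        omega
      have fχ := h.fresh _ h1
      have fψ := h.fresh _ h2
      have sub : s.image (cmap a b c) ⊆ {c, x} := by
        refine (Finset.image_subset_image (f := cmap a b c) hsin).trans ?_
        intro v
        rw [mem_image_cmap, ex]
        simp only [Finset.mem_insert, Finset.mem_singleton]
        grind
      refine Adj3.mono sub (contr_cycle hM h (x := x) (y := y) (z := z) (by grind) (by grind) hyz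
        hy hz (ey ▸ h1) (ez ▸ h2) H' H a1 hH a3 hH4 ?_ ?_)
      · refine subset_trans ?_ a2
        intro v hv
        rw [mem_image_cmap, ey]
        rw [ey] at fχ
        simp only [Finset.mem_insert, Finset.mem_singleton] at *
        grind
      · refine subset_trans ?_ hHψ
        intro v hv
        rw [mem_image_cmap, ez]
        rw [ez] at fψ
        simp only [Finset.mem_insert, Finset.mem_singleton] at *
        grind

set_option maxHeartbeats 1000000 in
theorem contr_good {M : SComplex} {a b c : ℕ} (hM : Good M) (h : CD M a b c) :
    Good (M.contr a b c) := by
  have hac := h.ac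
  have hbc := h.bc
  have hab := h.ab
  refine ⟨⟨_, contr_mem h.mem⟩, contr_pure hM h, contr_ridge hM h, ?_⟩
  intro s G H hG hH hG4 hH4 hsG hsH
  obtain ⟨φ, hφ, rfl⟩ := Finset.mem_image.mp hG
  obtain ⟨ψ, hψ, rfl⟩ := Finset.mem_image.mp hH
  have hφ4 : φ.card = 4 := le_antisymm (hM.card_le hφ) (hG4 ▸ Finset.card_image_le)
  have hψ4 : ψ.card = 4 := le_antisymm (hM.card_le hψ) (hH4 ▸ Finset.card_image_le)
  have base : ∀ s' φ ψ : Finset ℕ, φ ∈ M.faces → ψ ∈ M.faces → φ.card = 4 → ψ.card = 4 →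
      s' ⊆ φ → s' ⊆ ψ → s ⊆ s'.image (cmap a b c) → ∀ G H : Finset ℕ,
      G ∈ (M.contr a b c).faces → H ∈ (M.contr a b c).faces → G.card = 4 → H.card = 4 →
      φ.image (cmap a b c) ⊆ G → ψ.image (cmap a b c) ⊆ H →
      Relation.ReflTransGen ((M.contr a b c).Adj3 s) G H := by
    intro s' φ ψ h1 h2 h3 h4 h5 h6 h7 G H g1 g2 g3 g4 g5 g6
    exact Adj3.mono h7 (contr_path hM h s' φ ψ h1 h3 h5 (hM.conn s' φ ψ h1 h2 h3 h4 h5 h6)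
      G H g1 g2 g3 g4 g5 g6)
  have fφ := h.fresh _ hφ
  have fψ := h.fresh _ hψ
  have mφ : ∀ v ∈ s, (v = c ∧ (a ∈ φ ∨ b ∈ φ)) ∨ (v ∈ φ ∧ v ≠ a ∧ v ≠ b) := fun v hv =>
    (mem_image_cmap a b c φ v).mp (hsG hv)
  have mψ : ∀ v ∈ s, (v = c ∧ (a ∈ ψ ∨ b ∈ ψ)) ∨ (v ∈ ψ ∧ v ≠ a ∧ v ≠ b) := fun v hv =>
    (mem_image_cmap a b c ψ v).mp (hsH hv)
  by_cases hc : c ∈ s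
  · have two : ∀ d, (d = a ∨ d = b) → ∀ χ χ' : Finset ℕ, χ ∈ M.faces → χ' ∈ M.faces → χ.card = 4 →
        χ'.card = 4 → insert d (s.erase c) ⊆ χ → insert d (s.erase c) ⊆ χ' → ∀ G H : Finset ℕ,
        G ∈ (M.contr a b c).faces → H ∈ (M.contr a b c).faces → G.card = 4 → H.card = 4 →
        χ.image (cmap a b c) ⊆ G → χ'.image (cmap a b c) ⊆ H →
        Relation.ReflTransGen ((M.contr a b c).Adj3 s) G H := by
      intro d hd χ χ' h1 h2 h3 h4 h5 h6
      refine base _ χ χ' h1 h2 h3 h4 h5 h6 ?_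
      intro v hv
      rw [mem_image_cmap]
      have := mφ v hv
      grind
    have subφ : ∀ d, d ∈ φ → insert d (s.erase c) ⊆ φ := by
      intro d hd v hv
      rcases Finset.mem_insert.mp hv with rfl | hv
      · exact hd
      rw [Finset.mem_erase] at hv
      rcases mφ v hv.2 with h | h
      · exact absurd h.1 hv.1
      · exact h.1
    have subψ : ∀ d, d ∈ ψ → insert d (s.erase c) ⊆ ψ := by
      intro d hd v hv
      rcases Finset.mem_insert.mp hv with rfl | hv
      · exact hd
      rw [Finset.mem_erase] at hv
      rcases mψ v hv.2 with h | h
      · exact absurd h.1 hv.1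
      · exact h.1
    have cross : a ∉ s.erase c → b ∉ s.erase c → insert a (s.erase c) ∈ M.faces →
        insert b (s.erase c) ∈ M.faces → ∃ χ ∈ M.faces, χ.card = 4 ∧
        insert a (s.erase c) ⊆ χ ∧ insert b (s.erase c) ⊆ χ ∧
        ∃ G ∈ (M.contr a b c).faces, G.card = 4 ∧ χ.image (cmap a b c) ⊆ G := by
      intro h1 h2 h3 h4
      obtain ⟨χ, g1, g2, g3⟩ := hM.pure _ (h.link _ h1 h2 h3 h4)
      obtain ⟨G, g4, g5, g6⟩ := contr_pure hM h _ (contr_mem (a := a) (b := b) (c := c) g1)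
      refine ⟨χ, g1, g3, ?_, ?_, G, g4, g6, g5⟩
      · refine subset_trans ?_ g2
        intro v; simp only [Finset.mem_insert]; tauto
      · exact (Finset.subset_insert _ _).trans g2
    have na : a ∉ s.erase c := by
      intro ha
      have := mφ a
      grind
    have nb : b ∉ s.erase c := by
      intro ha
      have := mφ b
      grind
    have oφ : a ∈ φ ∨ b ∈ φ := by have := mφ c hc; grind
    have oψ : a ∈ ψ ∨ b ∈ ψ := by have := mψ c hc; grind
    rcases oφ with oφ | oφ <;> rcases oψ with oψ | oψ
    · exact two a (Or.inl rfl) φ ψ hφ hψ hφ4 hψ4 (subφ a oφ) (subψ a oψ) _ _ hG hH hG4 hH4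
        (subset_refl _) (subset_refl _)
    · obtain ⟨χ, x1, x2, x3, x4, X, x5, x6, x7⟩ := cross na nb
        (M.down_closed φ hφ _ (subφ a oφ) (by simp)) (M.down_closed ψ hψ _ (subψ b oψ) (by simp))
      exact (two a (Or.inl rfl) φ χ hφ x1 hφ4 x2 (subφ a oφ) x3 _ _ hG x5 hG4 x6
        (subset_refl _) x7).trans (two b (Or.inr rfl) χ ψ x1 hψ x2 hψ4 x4 (subψ b oψ) _ _ x5 hH x6
        hH4 x7 (subset_refl _))
    · obtain ⟨χ, x1, x2, x3, x4, X, x5, x6, x7⟩ := cross na nb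
        (M.down_closed ψ hψ _ (subψ a oψ) (by simp)) (M.down_closed φ hφ _ (subφ b oφ) (by simp))
      exact (two b (Or.inr rfl) φ χ hφ x1 hφ4 x2 (subφ b oφ) x4 _ _ hG x5 hG4 x6
        (subset_refl _) x7).trans (two a (Or.inl rfl) χ ψ x1 hψ x2 hψ4 x3 (subψ a oψ) _ _ x5 hH x6
        hH4 x7 (subset_refl _))
    · exact two b (Or.inr rfl) φ ψ hφ hψ hφ4 hψ4 (subφ b oφ) (subψ b oψ) _ _ hG hH hG4 hH4
        (subset_refl _) (subset_refl _)
  · refine base s φ ψ hφ hψ hφ4 hψ4 ?_ ?_ ?_ _ _ hG hH hG4 hH4 (subset_refl _) (subset_refl _)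
    · intro v hv
      have := mφ v hv
      grind
    · intro v hv
      have := mψ v hv
      grind
    · intro v hv
      rw [mem_image_cmap]
      have := mφ v hv
      grind


theorem mem_vertexSet (K : SComplex) (v : ℕ) : v ∈ K.vertexSet ↔ ({v} : Finset ℕ) ∈ K.faces := by
  rw [vertexSet, Finset.mem_sup]
  constructor
  · rintro ⟨s, hs, hv⟩
    exact K.down_closed s hs _ (by simpa using hv) (by simp)
  · intro h
    exact ⟨_, h, by simp⟩

theorem fnum_zero (K : SComplex) : K.fnum 0 = K.vertexSet.card := by
  rw [fnum, ← Finset.card_image_of_injective K.vertexSet (Finset.singleton_injective)]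
  congr 1
  ext s
  rw [Finset.mem_filter, Finset.mem_image]
  constructor
  · rintro ⟨h1, h2⟩
    obtain ⟨v, rfl⟩ := Finset.card_eq_one.mp h2
    exact ⟨v, (mem_vertexSet K v).mpr h1, rfl⟩
  · rintro ⟨v, hv, rfl⟩
    exact ⟨(mem_vertexSet K v).mp hv, by simp⟩

theorem mem_lk_vertexSet (K : SComplex) (a b v : ℕ) :
    v ∈ (K.lk {a, b}).vertexSet ↔ v ≠ a ∧ v ≠ b ∧ insert v {a, b} ∈ K.faces := by
  rw [mem_vertexSet, mem_lk, Finset.singleton_union]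
  constructor
  · rintro ⟨_, h1, h2⟩
    have : v ∉ ({a, b} : Finset ℕ) := by
      intro hh
      have : v ∈ ({v} : Finset ℕ) ∩ {a, b} := by simpa using hh
      rw [h1] at this
      simp at this
    refine ⟨by grind, by grind, h2⟩
  · rintro ⟨h1, h2, h3⟩
    refine ⟨K.down_closed _ h3 _ (by simp) (by simp), ?_, h3⟩
    ext x
    simp only [Finset.mem_inter, Finset.mem_insert, Finset.mem_singleton, Finset.notMem_empty,
      iff_false]
    grind

theorem deg_eq (K : SComplex) (a b : ℕ) : K.deg {a, b} = (K.lk {a, b}).vertexSet.card := by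
  rw [deg, fnum_zero]

theorem Good.avoid {M : SComplex} (hM : Good M) {σ : Finset ℕ} (hσ : σ ∈ M.faces) (b : ℕ)
    (hb : b ∉ σ) : ∃ φ ∈ M.faces, σ ⊆ φ ∧ φ.card = 4 ∧ b ∉ φ := by
  obtain ⟨φ, h2, h3, h4⟩ := hM.pure σ hσ
  by_cases hcol : b ∈ φ
  · have hr : (φ.erase b).card = 3 := by rw [Finset.card_erase_of_mem hcol, h4]
    have hrm : φ.erase b ∈ M.faces := M.down_closed φ h2 _ (Finset.erase_subset _ _)
      (by intro e; rw [e] at hr; simp at hr)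
    obtain ⟨p, q, hpq, hp, hq, hpq2⟩ := hM.ridge _ hrm hr
    have ex : ∃ p, p ∉ φ.erase b ∧ p ≠ b ∧ insert p (φ.erase b) ∈ M.faces := by
      by_cases hpb : p = b
      · exact ⟨q, hq, by rw [← hpb]; exact hpq.symm, (hpq2 q hq).mpr (Or.inr rfl)⟩
      · exact ⟨p, hp, hpb, (hpq2 p hp).mpr (Or.inl rfl)⟩
    obtain ⟨p, hp, hpb, hpm⟩ := ex
    refine ⟨_, hpm, ?_, by rw [Finset.card_insert_of_notMem hp, hr], by grind⟩
    intro v hv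
    have := h3 hv
    grind
  · exact ⟨φ, h2, h3, h4, hcol⟩

theorem bdry_iff {M : SComplex} {a b c : ℕ} (hM : Good M) (h : CD M a b c) (s : Finset ℕ) :
    s ∈ bdryFaces (M.faces.filter fun α => a ∉ α ∧ b ∉ α) 3 ↔
      s ∈ M.faces ∧ a ∉ s ∧ b ∉ s ∧ (insert a s ∈ M.faces ∨ insert b s ∈ M.faces) := by
  have hab := h.ab
  have no5 : ∀ γ : Finset ℕ, γ.card = 3 → a ∉ γ → b ∉ γ → insert a γ ∈ M.faces →
      insert b γ ∈ M.faces → False := by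
    intro γ h1 h2 h3 h4 h5
    have := hM.card_le (h.link γ h2 h3 h4 h5)
    rw [Finset.card_insert_of_notMem (by grind), Finset.card_insert_of_notMem h3] at this
    omega
  have inj : ∀ {r : Finset ℕ} {v v'}, v ∉ r → insert v r = insert v' r → v = v' := by
    intro r v v' h1 h2
    have : v ∈ insert v' r := by rw [← h2]; simp
    grind
  rw [bdryFaces, Finset.mem_filter, Finset.mem_filter]
  constructor
  · rintro ⟨⟨h1, h2, h3⟩, r, hr, hsr, hr3, h4⟩
    refine ⟨h1, h2, h3, ?_⟩
    rw [Finset.mem_filter] at hr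
    obtain ⟨hr, ha, hb⟩ := hr
    have : insert a r ∈ M.faces ∨ insert b r ∈ M.faces := by
      by_contra hcon
      push Not at hcon
      obtain ⟨p, q, g1, g2, g3, g4⟩ := hM.ridge r hr hr3
      obtain ⟨F, hF⟩ := Finset.card_eq_one.mp h4
      have mem : ∀ v, v ∉ r → (v = p ∨ v = q) → insert v r = F := by
        intro v hv hvpq
        have hm := (g4 v hv).mpr hvpq
        have : insert v r ∈ ((M.faces.filter fun α => a ∉ α ∧ b ∉ α).filter
            fun t => t.card = 3 + 1 ∧ r ⊆ t) := by
          rw [Finset.mem_filter, Finset.mem_filter]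
          refine ⟨⟨hm, ?_, ?_⟩, by rw [Finset.card_insert_of_notMem hv, hr3],
            Finset.subset_insert _ _⟩
          · grind
          · grind
        rw [hF] at this
        simpa using this
      exact g1 (inj g2 ((mem p g2 (Or.inl rfl)).trans (mem q g3 (Or.inr rfl)).symm))
    refine this.imp ?_ ?_ <;> intro hh <;>
      exact M.down_closed _ hh _ (Finset.insert_subset_insert _ hsr) (by simp)
  · rintro ⟨h1, h2, h3, h4⟩
    refine ⟨⟨h1, h2, h3⟩, ?_⟩
    have gen : ∀ d e, d ≠ e → (d = a ∧ e = b ∨ d = b ∧ e = a) → insert d s ∈ M.faces →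
        ∃ r ∈ M.faces, d ∉ r ∧ e ∉ r ∧ s ⊆ r ∧ r.card = 3 ∧ insert d r ∈ M.faces := by
      intro d e hde hdd hd
      obtain ⟨φ, f1, f2, f3, f4⟩ := hM.avoid hd e (by grind)
      have hdφ : d ∈ φ := f2 (by simp)
      have hr3 : (φ.erase d).card = 3 := by rw [Finset.card_erase_of_mem hdφ, f3]
      refine ⟨φ.erase d, M.down_closed φ f1 _ (Finset.erase_subset _ _) 
        (by intro e; rw [e] at hr3; simp at hr3), by grind, by grind, ?_, hr3, ?_⟩
      · intro v hv
        have := f2 (Finset.mem_insert_of_mem hv)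
        grind
      · rwa [Finset.insert_erase hdφ]
    have : ∃ r ∈ M.faces, a ∉ r ∧ b ∉ r ∧ s ⊆ r ∧ r.card = 3 ∧
        (insert a r ∈ M.faces ∨ insert b r ∈ M.faces) := by
      rcases h4 with h4 | h4
      · obtain ⟨r, g1, g2, g3, g4, g5, g6⟩ := gen a b hab (by tauto) h4
        exact ⟨r, g1, g2, g3, g4, g5, Or.inl g6⟩
      · obtain ⟨r, g1, g2, g3, g4, g5, g6⟩ := gen b a hab.symm (by tauto) h4
        exact ⟨r, g1, g3, g2, g4, g5, Or.inr g6⟩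
    obtain ⟨r, g1, g2, g3, g4, g5, g6⟩ := this
    refine ⟨r, Finset.mem_filter.mpr ⟨g1, g2, g3⟩, g4, g5, ?_⟩
    have n5 := no5 r g5 g2 g3
    obtain ⟨p, q, k1, k2, k3, k4⟩ := hM.ridge r g1 g5
    have ka := k4 a g2
    have kb := k4 b g3
    obtain ⟨x, hx, hxa, hxb, hxx⟩ : ∃ x, x ∉ r ∧ x ≠ a ∧ x ≠ b ∧
        ∀ v, v ∉ r → (insert v r ∈ M.faces ∧ v ≠ a ∧ v ≠ b ↔ v = x) := by
      by_cases hp : p = a ∨ p = b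
      · refine ⟨q, k3, by grind, by grind, ?_⟩
        intro v hv
        rw [k4 v hv]
        grind
      · refine ⟨p, k2, by grind, by grind, ?_⟩
        intro v hv
        rw [k4 v hv]
        grind
    rw [Finset.card_eq_one]
    refine ⟨insert x r, ?_⟩
    ext F
    rw [Finset.mem_filter, Finset.mem_filter, Finset.mem_singleton]
    constructor
    · rintro ⟨⟨m1, m2, m3⟩, m4, m5⟩
      have : (F \ r).card = 1 := by rw [Finset.card_sdiff_of_subset m5]; omega
      obtain ⟨v, hv⟩ := Finset.card_eq_one.mp this
      have hv' : v ∈ F \ r := by rw [hv]; simp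
      have hvr := (Finset.mem_sdiff.mp hv').2
      have hvF := (Finset.mem_sdiff.mp hv').1
      have e : insert v r = F := by
        refine Finset.eq_of_subset_of_card_le (Finset.insert_subset hvF m5) ?_
        rw [Finset.card_insert_of_notMem hvr]; omega
      have : v = x := (hxx v hvr).mp ⟨e ▸ m1, by rintro rfl; exact m2 hvF, 
        by rintro rfl; exact m3 hvF⟩
      rw [← this, e]
    · rintro rfl
      refine ⟨⟨((hxx x hx).mpr rfl).1, by grind, by grind⟩,
        by rw [Finset.card_insert_of_notMem hx, g5], Finset.subset_insert _ _⟩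

theorem contr_isContr {M : SComplex} {a b c : ℕ} (hM : Good M) (h : CD M a b c) :
    EdgeContractionAt 3 M a b (M.contr a b c) := by
  have hac := h.ac
  have hbc := h.bc
  have hab := h.ab
  refine ⟨h.mem, h.ab, ?_, c, ?_, ?_⟩
  · ext γ
    rw [Finset.mem_inter, mem_lk, mem_lk, mem_lk]
    have ins : ∀ d (γ : Finset ℕ), γ ∪ {d} = insert d γ := by
      intro d γ; rw [Finset.union_comm, Finset.singleton_union]
    have ins2 : γ ∪ {a, b} = insert a (insert b γ) := by
      ext v; simp only [Finset.mem_union, Finset.mem_insert, Finset.mem_singleton]; tauto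
    have e1 : ∀ d (γ : Finset ℕ), γ ∩ {d} = ∅ ↔ d ∉ γ := by
      intro d γ
      rw [← Finset.disjoint_iff_inter_eq_empty, Finset.disjoint_singleton_right]
    have e2 : γ ∩ {a, b} = ∅ ↔ a ∉ γ ∧ b ∉ γ := by
      rw [← Finset.disjoint_iff_inter_eq_empty, Finset.disjoint_insert_right,
        Finset.disjoint_singleton_right]
    rw [ins, ins, ins2, e1, e1, e2]
    constructor
    · rintro ⟨⟨h1, h2, h3⟩, _, h4, h5⟩
      exact ⟨h1, ⟨h2, h4⟩, h.link γ h2 h4 h3 h5⟩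
    · rintro ⟨h1, ⟨h2, h3⟩, h4⟩
      refine ⟨⟨h1, h2, M.down_closed _ h4 _ ?_ (by simp)⟩, h1, h3,
        M.down_closed _ h4 _ (Finset.subset_insert _ _) (by simp)⟩
      intro v; simp only [Finset.mem_insert]; tauto
  · rw [mem_vertexSet]
    intro hh
    exact h.fresh _ hh (by simp)
  · ext τ
    rw [coneFaces]
    simp only [Finset.mem_union, Finset.mem_image, Finset.mem_singleton, bdry_iff hM h,
      Finset.mem_filter]
    by_cases hc : c ∈ τ
    · obtain ⟨τ', hτ', rfl⟩ : ∃ τ', c ∉ τ' ∧ insert c τ' = τ :=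
        ⟨τ.erase c, by simp, Finset.insert_erase hc⟩
      rw [contr_mem2 h hτ']
      have nf : insert c τ' ∉ M.faces := fun hh => h.fresh _ hh hc
      constructor
      · rintro ⟨h1, h2, h3⟩
        right
        by_cases hem : τ' = ∅
        · right; rw [hem]; rfl
        · left; right
          refine ⟨τ', ⟨?_, h1, h2, h3⟩, rfl⟩
          rcases h3 with h3 | h3 <;> exact M.down_closed _ h3 _ (Finset.subset_insert _ _) hem
      · rintro (h1 | (h1 | ⟨σ, ⟨h1, h2⟩, h3⟩) | h1)
        · exact absurd h1.1 nf
        · exact absurd h1.1 nf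
        · have : σ = τ' := by
            have := h.fresh σ h1
            ext v
            have : v ∈ insert c σ ↔ v ∈ insert c τ' := by rw [h3]
            grind
          rw [← this]
          exact h2
        · have : τ' = ∅ := by
            rw [Finset.eq_empty_iff_forall_notMem]
            intro v hv
            have : v ∈ ({c} : Finset ℕ) := by rw [← h1]; simp [hv]
            grind
          subst this
          exact ⟨by simp, by simp, Or.inl (M.down_closed _ h.mem _ (by simp) (by simp))⟩
    · rw [contr_mem1 h hc]
      constructor
      · intro hh; exact Or.inl hh
      · rintro (h1 | (h1 | ⟨σ, ⟨h1, h2⟩, rfl⟩) | rfl)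
        · exact h1
        · exact ⟨h1.1, h1.2.1, h1.2.2.1⟩
        · simp at hc
        · simp at hc

theorem contr_g2 {M : SComplex} {a b c : ℕ} (h : CD M a b c) :
    (M.contr a b c).g2 = M.g2 + 3 - (M.deg {a, b} : ℤ) := by
  have hac := h.ac
  have hbc := h.bc
  have hab := h.ab
  have va : ({a} : Finset ℕ) ∈ M.faces := M.down_closed _ h.mem _ (by simp) (by simp)
  have vb : ({b} : Finset ℕ) ∈ M.faces := M.down_closed _ h.mem _ (by simp) (by simp)
  have vc : ({c} : Finset ℕ) ∉ M.faces := fun hh => h.fresh _ hh (by simp)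
  have f0 : (M.contr a b c).fnum 0 + 1 = M.fnum 0 := by
    rw [fnum_zero, fnum_zero]
    have : (M.contr a b c).vertexSet = insert c ((M.vertexSet.erase a).erase b) := by
      ext v
      rw [mem_vertexSet, Finset.mem_insert, Finset.mem_erase, Finset.mem_erase, mem_vertexSet]
      by_cases hv : v = c
      · subst hv
        have := (contr_mem2 h (τ := ∅) (by simp)).mpr ⟨by simp, by simp, Or.inl va⟩
        simpa using this
      · rw [contr_mem1 h (by simpa using Ne.symm hv)]
        simp only [Finset.mem_singleton]
        grind
    rw [this, Finset.card_insert_of_notMem, Finset.card_erase_of_mem, Finset.card_erase_of_mem]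
    · have : 2 ≤ M.vertexSet.card := by
        rw [← Finset.card_pair hab]
        refine Finset.card_le_card ?_
        intro v hv
        rw [mem_vertexSet]
        simp only [Finset.mem_insert, Finset.mem_singleton] at hv
        rcases hv with rfl | rfl <;> assumption
      omega
    · rwa [mem_vertexSet]
    · rw [Finset.mem_erase, mem_vertexSet]; exact ⟨hab.symm, vb⟩
    · rw [Finset.mem_erase, Finset.mem_erase, mem_vertexSet]; tauto
  set E0 := (M.faces.filter fun s => s.card = 1 + 1).filter fun s => a ∉ s ∧ b ∉ s with hE0
  set N : ℕ → Finset ℕ := fun d => M.vertexSet.filter fun v => v ≠ a ∧ v ≠ b ∧ {d, v} ∈ M.faces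
    with hN
  have memN : ∀ d v, v ∈ N d ↔ v ≠ a ∧ v ≠ b ∧ {d, v} ∈ M.faces := by
    intro d v
    rw [hN]
    simp only [Finset.mem_filter, mem_vertexSet]
    constructor
    · exact fun h => h.2
    · intro h
      exact ⟨M.down_closed _ h.2.2 _ (by simp) (by simp), h⟩
  have injc : ∀ (d : ℕ) (S : Finset ℕ), d ∉ S → (S.image fun v => ({d, v} : Finset ℕ)).card = S.card := by
    intro d S hd
    refine Finset.card_image_of_injOn ?_
    intro x hx y hy hxy
    have hx' : x ∈ S := hx
    have : x ∈ ({d, y} : Finset ℕ) := by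
      have e : ({d, x} : Finset ℕ) = {d, y} := hxy
      rw [← e]; simp
    grind
  have f1M : M.fnum 1 = E0.card + (N a).card + (N b).card + 1 := by
    have e : (M.faces.filter fun s => s.card = 1 + 1) =
        ((E0 ∪ (N a).image fun v => ({a, v} : Finset ℕ)) ∪ (N b).image fun v => ({b, v} : Finset ℕ))
          ∪ {{a, b}} := by
      ext s
      simp only [hE0, Finset.mem_union, Finset.mem_filter, Finset.mem_image, Finset.mem_singleton,
        memN]
      constructor
      · rintro ⟨h1, h2⟩
        obtain ⟨x, y, hxy, rfl⟩ := Finset.card_eq_two.mp h2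
        by_cases hs : a ∉ ({x, y} : Finset ℕ) ∧ b ∉ ({x, y} : Finset ℕ)
        · exact Or.inl (Or.inl (Or.inl ⟨⟨h1, h2⟩, hs⟩))
        have h1' : ({y, x} : Finset ℕ) ∈ M.faces := by rwa [Finset.pair_comm]
        by_cases hs2 : a ∈ ({x, y} : Finset ℕ) ∧ b ∈ ({x, y} : Finset ℕ)
        · right
          ext v; grind
        by_cases ha : a ∈ ({x, y} : Finset ℕ)
        · refine Or.inl (Or.inl (Or.inr ?_))
          by_cases hax : x = a
          · subst hax; exact ⟨y, by grind, rfl⟩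
          · have hay : y = a := by grind
            subst hay; exact ⟨x, by grind, Finset.pair_comm _ _⟩
        · refine Or.inl (Or.inr ?_)
          by_cases hax : x = b
          · subst hax; exact ⟨y, by grind, rfl⟩
          · have hay : y = b := by grind
            subst hay; exact ⟨x, by grind, Finset.pair_comm _ _⟩
      · rintro (((h1 | ⟨v, ⟨h1, h2, h3⟩, rfl⟩) | ⟨v, ⟨h1, h2, h3⟩, rfl⟩) | rfl)
        · exact h1.1
        · exact ⟨h3, Finset.card_pair h1.symm⟩
        · exact ⟨h3, Finset.card_pair h2.symm⟩
        · exact ⟨h.mem, Finset.card_pair hab⟩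
    rw [fnum, e, Finset.card_union_of_disjoint, Finset.card_union_of_disjoint,
      Finset.card_union_of_disjoint, injc, injc, Finset.card_singleton]
    · rw [memN]; tauto
    · rw [memN]; tauto
    · rw [Finset.disjoint_left]
      intro s hs hs'
      obtain ⟨v, hv, rfl⟩ := Finset.mem_image.mp hs'
      rw [hE0, Finset.mem_filter] at hs
      simp at hs
    · rw [Finset.disjoint_left]
      intro s hs hs'
      obtain ⟨v, hv, rfl⟩ := Finset.mem_image.mp hs'
      rcases Finset.mem_union.mp hs with hs | hs
      · rw [hE0, Finset.mem_filter] at hs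
        simp at hs
      · obtain ⟨v', hv', e'⟩ := Finset.mem_image.mp hs
        rw [memN] at hv hv'
        have : a ∈ ({b, v} : Finset ℕ) := by rw [← e']; simp
        grind
    · rw [Finset.disjoint_singleton_right]
      intro hs
      rcases Finset.mem_union.mp hs with hs | hs
      · rcases Finset.mem_union.mp hs with hs | hs
        · rw [hE0, Finset.mem_filter] at hs
          simp at hs
        · obtain ⟨v', hv', e'⟩ := Finset.mem_image.mp hs
          rw [memN] at hv'
          have : b ∈ ({a, v'} : Finset ℕ) := by rw [e']; simp
          grind
      · obtain ⟨v', hv', e'⟩ := Finset.mem_image.mp hs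
        rw [memN] at hv'
        have : a ∈ ({b, v'} : Finset ℕ) := by rw [e']; simp
        grind
  have f1K : (M.contr a b c).fnum 1 = E0.card + (N a ∪ N b).card := by
    have e : ((M.contr a b c).faces.filter fun s => s.card = 1 + 1) =
        E0 ∪ (N a ∪ N b).image fun v => ({c, v} : Finset ℕ) := by
      ext s
      simp only [hE0, Finset.mem_union, Finset.mem_filter, Finset.mem_image, memN]
      by_cases hc : c ∈ s
      · have nf : s ∉ M.faces := fun hh => h.fresh _ hh hc
        constructor
        · rintro ⟨h1, h2⟩
          obtain ⟨τ, hτ, rfl⟩ : ∃ τ, c ∉ τ ∧ insert c τ = s :=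
            ⟨s.erase c, by simp, Finset.insert_erase hc⟩
          rw [Finset.card_insert_of_notMem hτ] at h2
          obtain ⟨v, rfl⟩ := Finset.card_eq_one.mp (by omega : τ.card = 1)
          rw [contr_mem2 h hτ] at h1
          refine Or.inr ⟨v, ?_, rfl⟩
          simp only [Finset.mem_singleton] at h1
          grind
        · rintro (h1 | ⟨v, hv, rfl⟩)
          · exact absurd h1.1.1 nf
          have hvc : v ≠ c := by
            rintro rfl
            rcases hv with hv | hv <;> exact h.fresh _ hv.2.2 (by simp)
          refine ⟨?_, Finset.card_pair hvc.symm⟩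
          rw [contr_mem2 h (by simpa using hvc.symm)]
          simp only [Finset.mem_singleton]
          grind
      · rw [contr_mem1 h hc]
        constructor
        · rintro ⟨⟨h1, h2⟩, h3⟩
          exact Or.inl ⟨⟨h1, h3⟩, h2⟩
        · rintro (⟨⟨h1, h3⟩, h2⟩ | ⟨v, hv, rfl⟩)
          · exact ⟨⟨h1, h2⟩, h3⟩
          · simp at hc
    rw [fnum, e, Finset.card_union_of_disjoint, injc]
    · rw [Finset.mem_union, memN, memN]
      rintro (hv | hv) <;> exact h.fresh _ hv.2.2 (by simp)
    · rw [Finset.disjoint_left]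
      intro s hs hs'
      obtain ⟨v, hv, rfl⟩ := Finset.mem_image.mp hs'
      rw [hE0, Finset.mem_filter, Finset.mem_filter] at hs
      exact h.fresh _ hs.1.1 (by simp)
  have hd : M.deg {a, b} = (N a ∩ N b).card := by
    rw [deg_eq]
    congr 1
    ext v
    rw [mem_lk_vertexSet, Finset.mem_inter, memN, memN]
    constructor
    · rintro ⟨h1, h2, h3⟩
      refine ⟨⟨h1, h2, M.down_closed _ h3 _ ?_ (by simp)⟩, h1, h2,
        M.down_closed _ h3 _ ?_ (by simp)⟩
      · intro x; simp only [Finset.mem_insert, Finset.mem_singleton]; tauto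
      · intro x; simp only [Finset.mem_insert, Finset.mem_singleton]; tauto
    · rintro ⟨⟨h1, h2, h3⟩, _, _, h4⟩
      refine ⟨h1, h2, ?_⟩
      have := h.link {v} (by simpa using h1.symm) (by simpa using h2.symm) h3 h4
      convert this using 1
      ext x; simp only [Finset.mem_insert, Finset.mem_singleton]; tauto
  have := Finset.card_union_add_card_inter (N a) (N b)
  simp only [g2]
  omega


/-- Carrier of a vertex of the subdivision. -/
def smap (t w a b v : ℕ) : Finset ℕ := if v = a then {t} else if v = b then {t, w} else {v}

/-- Carrier of a face of the subdivision. -/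
def carr (t w a b : ℕ) (σ : Finset ℕ) : Finset ℕ := σ.biUnion (smap t w a b)

/-- Data for subdividing the edge `tw` (with `t` renamed to `a` and new vertex `b`). -/
structure SD (K : SComplex) (t w a b : ℕ) : Prop where
  tw : t ≠ w
  mem : ({t, w} : Finset ℕ) ∈ K.faces
  ab : a ≠ b
  fa : ∀ σ ∈ K.faces, a ∉ σ
  fb : ∀ σ ∈ K.faces, b ∉ σ

theorem mem_carr (t w a b : ℕ) (σ : Finset ℕ) (v : ℕ) (hab : a ≠ b) : v ∈ carr t w a b σ ↔
    (v ∈ σ ∧ v ≠ a ∧ v ≠ b) ∨ (v = t ∧ (a ∈ σ ∨ b ∈ σ)) ∨ (v = w ∧ b ∈ σ) := by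
  rw [carr, Finset.mem_biUnion]
  constructor
  · rintro ⟨x, hx, hv⟩
    rw [smap] at hv
    split_ifs at hv <;> grind
  · rintro (h | ⟨rfl, h | h⟩ | ⟨rfl, h⟩)
    · exact ⟨v, h.1, by simp [smap, h.2]⟩
    · exact ⟨a, h, by simp [smap]⟩
    · exact ⟨b, h, by simp [smap, hab.symm]⟩
    · exact ⟨b, h, by simp [smap, hab.symm]⟩

theorem carr_mono (t w a b : ℕ) {s s' : Finset ℕ} (h : s ⊆ s') :
    carr t w a b s ⊆ carr t w a b s' :=
  Finset.biUnion_subset_biUnion_of_subset_left _ h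

/-- The subdivision of `K` at the edge `tw`. -/
def sub (K : SComplex) (t w a b : ℕ) : SComplex where
  faces := (insert a (insert b K.vertexSet)).powerset.filter fun σ =>
    carr t w a b σ ∈ K.faces ∧ t ∉ σ ∧ ¬ (a ∈ σ ∧ w ∈ σ)
  not_empty_mem := by
    intro h
    have := (Finset.mem_filter.mp h).2.1
    exact K.not_empty_mem (by simpa [carr] using this)
  down_closed := by
    intro s hs s' hss hne
    rw [Finset.mem_filter, Finset.mem_powerset] at hs ⊢
    refine ⟨hss.trans hs.1, K.down_closed _ hs.2.1 _ (carr_mono t w a b hss) ?_,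
      fun h => hs.2.2.1 (hss h), fun h => hs.2.2.2 ⟨hss h.1, hss h.2⟩⟩
    obtain ⟨x, hx⟩ := Finset.nonempty_iff_ne_empty.mpr hne
    have hx2 : (smap t w a b x).Nonempty := by
      rw [smap]; split_ifs <;> simp
    obtain ⟨y, hy⟩ := hx2
    intro e
    have : y ∈ carr t w a b s' := Finset.mem_biUnion.mpr ⟨x, hx, hy⟩
    rw [e] at this
    simp at this

theorem mem_sub {K : SComplex} {t w a b : ℕ} (h : SD K t w a b) (σ : Finset ℕ) :
    σ ∈ (K.sub t w a b).faces ↔ carr t w a b σ ∈ K.faces ∧ t ∉ σ ∧ ¬ (a ∈ σ ∧ w ∈ σ) := by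
  rw [sub, Finset.mem_filter, Finset.mem_powerset, and_iff_right_iff_imp]
  rintro ⟨h1, h2, h3⟩ v hv
  rw [Finset.mem_insert, Finset.mem_insert]
  by_cases ha : v = a
  · exact Or.inl ha
  by_cases hb : v = b
  · exact Or.inr (Or.inl hb)
  refine Or.inr (Or.inr ?_)
  rw [mem_vertexSet]
  refine K.down_closed _ h1 _ ?_ (by simp)
  rw [Finset.singleton_subset_iff, mem_carr _ _ _ _ _ _ h.ab]
  exact Or.inl ⟨hv, ha, hb⟩

theorem SD.ne {K : SComplex} {t w a b : ℕ} (h : SD K t w a b) :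
    a ≠ t ∧ a ≠ w ∧ b ≠ t ∧ b ≠ w := by
  have h1 := h.fa _ h.mem
  have h2 := h.fb _ h.mem
  grind

/-- If `b ∉ σ` the carrier just renames `a` to `t`. -/
theorem carr_b {t w a b : ℕ} {σ : Finset ℕ} (hab : a ≠ b) (hb : b ∉ σ) :
    carr t w a b σ = if a ∈ σ then insert t (σ.erase a) else σ := by
  ext v
  rw [mem_carr _ _ _ _ _ _ hab]
  split_ifs <;> grind

set_option maxHeartbeats 4000000 in
theorem sub_ridge {K : SComplex} {t w a b : ℕ} (hK : Good K) (h : SD K t w a b) :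
    ∀ r ∈ (K.sub t w a b).faces, r.card = 3 → ∃ p q, p ≠ q ∧ p ∉ r ∧ q ∉ r ∧
    ∀ v, v ∉ r → (insert v r ∈ (K.sub t w a b).faces ↔ v = p ∨ v = q) := by
  obtain ⟨hat, haw, hbt, hbw⟩ := h.ne
  have hab := h.ab
  have htw := h.tw
  intro r hr hr3
  rw [mem_sub h] at hr
  obtain ⟨h1, h2, h3⟩ := hr
  have na := h.fa _ h1
  have nb := h.fb _ h1
  have ins : ∀ v, v ≠ a → v ≠ b → carr t w a b (insert v r) = insert v (carr t w a b r) := by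
    intro v hva hvb
    ext x
    rw [Finset.mem_insert, mem_carr _ _ _ _ _ _ hab, mem_carr _ _ _ _ _ _ hab]
    grind
  have mc : ∀ v, v ∈ carr t w a b r ↔
    (v ∈ r ∧ v ≠ a ∧ v ≠ b) ∨ (v = t ∧ (a ∈ r ∨ b ∈ r)) ∨ (v = w ∧ b ∈ r) := fun v =>
      mem_carr _ _ _ _ _ _ hab
  have rid : (carr t w a b r).card = 3 → ∃ p q, p ≠ q ∧ p ∉ carr t w a b r ∧ q ∉ carr t w a b r ∧
      p ≠ a ∧ p ≠ b ∧ q ≠ a ∧ q ≠ b ∧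
      ∀ v, v ∉ carr t w a b r → (insert v (carr t w a b r) ∈ K.faces ↔ v = p ∨ v = q) := by
    intro hc3
    obtain ⟨p, q, g1, g2, g3, g4⟩ := hK.ridge _ h1 hc3
    have hp := (g4 p g2).mpr (Or.inl rfl)
    have hq := (g4 q g3).mpr (Or.inr rfl)
    have a1 := h.fa _ hp
    have a2 := h.fb _ hp
    have a3 := h.fa _ hq
    have a4 := h.fb _ hq
    exact ⟨p, q, g1, g2, g3, by grind, by grind, by grind, by grind, g4⟩
  by_cases hb : b ∈ r
  · by_cases haw' : a ∈ r ∨ w ∈ r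
    · have hc3 : (carr t w a b r).card = 3 := by
        by_cases ha : a ∈ r
        · have : carr t w a b r = insert t (insert w ((r.erase a).erase b)) := by
            ext v; rw [mc]; grind
          rw [this, Finset.card_insert_of_notMem (by grind), Finset.card_insert_of_notMem (by grind),
            Finset.card_erase_of_mem (by grind), Finset.card_erase_of_mem ha]
          omega
        · have : carr t w a b r = insert t (r.erase b) := by
            ext v; rw [mc]; grind
          rw [this, Finset.card_insert_of_notMem (by grind), Finset.card_erase_of_mem hb]
          omega
      obtain ⟨p, q, g1, g2, g3, g4, g5, g6, g7, g8⟩ := rid hc3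
      have g2' := g2
      have g3' := g3
      rw [mc] at g2' g3'
      refine ⟨p, q, g1, by grind, by grind, ?_⟩
      intro v hv
      rw [mem_sub h]
      by_cases hva : v = a
      · subst hva; grind
      by_cases hvb : v = b
      · subst hvb; grind
      rw [ins v hva hvb]
      by_cases hvt : v = t
      · subst hvt; grind
      by_cases hvw : v = w
      · subst hvw; grind
      rw [g8 v (by rw [mc]; grind)]
      grind
    · push Not at haw'
      have hc4 : (carr t w a b r).card = 4 := by
        have : carr t w a b r = insert t (insert w (r.erase b)) := by
          ext v; rw [mc]; grind
        rw [this, Finset.card_insert_of_notMem (by grind), Finset.card_insert_of_notMem (by grind),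
          Finset.card_erase_of_mem hb]
        omega
      refine ⟨a, w, haw, haw'.1, haw'.2, ?_⟩
      intro v hv
      rw [mem_sub h]
      have same : (v = a ∨ v = w) → carr t w a b (insert v r) = carr t w a b r := by
        intro hvv
        ext x
        rw [mem_carr _ _ _ _ _ _ hab, mc]
        grind
      constructor
      · rintro ⟨v1, v2, v3⟩
        by_contra hcon
        push Not at hcon
        have hvb : v ≠ b := by grind
        rw [ins v hcon.1 hvb] at v1
        have := hK.card_le v1
        rw [Finset.card_insert_of_notMem (by rw [mc]; grind)] at this
        omega
      · intro hv'
        rw [same hv']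
        refine ⟨h1, by grind, by grind⟩
  · have hc := carr_b (t := t) (w := w) hab hb
    have hc3 : (carr t w a b r).card = 3 := by
      rw [hc]
      split_ifs with ha
      · rw [Finset.card_insert_of_notMem (by grind), Finset.card_erase_of_mem ha]
        omega
      · exact hr3
    obtain ⟨p, q, g1, g2, g3, g4, g5, g6, g7, g8⟩ := rid hc3
    have g2' := g2
    have g3' := g3
    rw [mc] at g2' g3'
    have ia : a ∉ r → carr t w a b (insert a r) = insert t (carr t w a b r) := by
      intro ha
      ext x
      rw [Finset.mem_insert, mem_carr _ _ _ _ _ _ hab, mc]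
      grind
    have ib : carr t w a b (insert b r) = insert t (insert w (carr t w a b r)) := by
      ext x
      rw [Finset.mem_insert, Finset.mem_insert, mem_carr _ _ _ _ _ _ hab, mc]
      grind
    have mt : t ∈ carr t w a b r ↔ a ∈ r := by rw [mc]; grind
    have mw : w ∈ carr t w a b r ↔ w ∈ r := by rw [mc]; grind
    have ca : a ∉ r → (insert a r ∈ (K.sub t w a b).faces ↔ w ∉ r ∧ (t = p ∨ t = q)) := by
      intro ha
      rw [mem_sub h, ia ha, g8 t (by rw [mt]; exact ha)]
      grind
    have cb : insert b r ∈ (K.sub t w a b).faces ↔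
        (a ∈ r ∧ (w = p ∨ w = q)) ∨ (w ∈ r ∧ (t = p ∨ t = q)) := by
      rw [mem_sub h, ib]
      by_cases ha : a ∈ r
      · have hw : w ∉ r := by tauto
        rw [Finset.insert_comm, Finset.insert_eq_of_mem (mt.mpr ha), g8 w (by rw [mw]; exact hw)]
        grind
      · by_cases hw : w ∈ r
        · rw [Finset.insert_eq_of_mem (mw.mpr hw), g8 t (by rw [mt]; exact ha)]
          grind
        · constructor
          · rintro ⟨k1, _⟩
            have := hK.card_le k1
            rw [Finset.card_insert_of_notMem (by grind),
              Finset.card_insert_of_notMem (by grind)] at this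
            omega
          · tauto
    have cw : w ∉ r → (insert w r ∈ (K.sub t w a b).faces ↔ a ∉ r ∧ (w = p ∨ w = q)) := by
      intro hw
      rw [mem_sub h, ins w haw.symm hbw.symm, g8 w (by rw [mw]; exact hw)]
      grind
    have ct : insert t r ∉ (K.sub t w a b).faces := by
      rw [mem_sub h]; simp
    have co : ∀ v, v ∉ r → v ≠ a → v ≠ b → v ≠ t → v ≠ w →
        (insert v r ∈ (K.sub t w a b).faces ↔ v = p ∨ v = q) := by
      intro v hv v1 v2 v3 v4
      rw [mem_sub h, ins v v1 v2, g8 v (by rw [mc]; grind)]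
      grind
    set e : ℕ → ℕ := fun p => if p = t then (if w ∈ r then b else a) else
      if p = w ∧ a ∈ r then b else p with he
    have pr : p ∉ r := by grind
    have qr : q ∉ r := by grind
    have pt : p = t → a ∉ r := by grind
    have qt : q = t → a ∉ r := by grind
    clear g2 g3 g2' g3' g8 ins mc rid hc hc3 ia ib mt mw na nb h1 hr3
    refine ⟨e p, e q, ?_, ?_, ?_, ?_⟩
    · simp only [he]; split_ifs <;> grind
    · simp only [he]; split_ifs <;> grind
    · simp only [he]; split_ifs <;> grind
    · intro v hv
      by_cases v1 : v = a
      · subst v1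
        rw [ca hv]
        simp only [he]; split_ifs <;> grind
      by_cases v2 : v = b
      · subst v2
        rw [cb]
        simp only [he]; split_ifs <;> grind
      by_cases v3 : v = t
      · subst v3
        simp only [ct, false_iff, he]
        split_ifs <;> grind
      by_cases v4 : v = w
      · subst v4
        rw [cw hv]
        simp only [he]; split_ifs <;> grind
      rw [co v hv v1 v2 v3 v4]
      simp only [he]; split_ifs <;> grind


theorem sub_lift1 {K : SComplex} {t w a b : ℕ} (h : SD K t w a b) {s Φ : Finset ℕ}
    (hΦ : Φ ∈ K.faces) (hs1 : t ∉ s) (hws : w ∉ s) (hsΦ : carr t w a b s ⊆ Φ) (ht : t ∈ Φ) :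
    ∃ φ ∈ (K.sub t w a b).faces, s ⊆ φ ∧ carr t w a b φ = Φ ∧ φ.card = Φ.card ∧
      φ = Φ.image (fun v => if v = t then a else if v = w then b else v) := by
  obtain ⟨hat, haw, hbt, hbw⟩ := h.ne
  have hab := h.ab
  have htw := h.tw
  have fa := h.fa _ hΦ
  have fb := h.fb _ hΦ
  have mi : ∀ v, v ∈ Φ.image (fun v => if v = t then a else if v = w then b else v) ↔
      v = a ∨ (v = b ∧ w ∈ Φ) ∨ (v ∈ Φ ∧ v ≠ t ∧ v ≠ w) := by
    intro v
    rw [Finset.mem_image]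
    constructor
    · rintro ⟨x, hx, rfl⟩
      split_ifs <;> grind
    · rintro (hh | ⟨hv, hh⟩ | hh)
      · exact ⟨t, ht, by simp [hh]⟩
      · exact ⟨w, hh, by simp [htw.symm, hv]⟩
      · exact ⟨v, hh.1, by simp [hh.2]⟩
  have hc : carr t w a b (Φ.image (fun v => if v = t then a else if v = w then b else v)) = Φ := by
    ext v
    rw [mem_carr _ _ _ _ _ _ hab, mi, mi, mi]
    grind
  refine ⟨_, ?_, ?_, hc, ?_, rfl⟩
  · rw [mem_sub h, hc, mi, mi, mi]
    refine ⟨hΦ, by grind, by grind⟩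
  · intro v hv
    rw [mi]
    by_cases hva : v = a
    · exact Or.inl hva
    by_cases hvb : v = b
    · subst hvb
      have : w ∈ Φ := hsΦ (by rw [mem_carr _ _ _ _ _ _ hab]; tauto)
      tauto
    have : v ∈ Φ := hsΦ (by rw [mem_carr _ _ _ _ _ _ hab]; tauto)
    grind
  · refine Finset.card_image_of_injOn ?_
    intro x hx y hy hxy
    have hx' : x ∈ Φ := hx
    have hy' : y ∈ Φ := hy
    simp only at hxy
    split_ifs at hxy <;> grind

theorem sub_lift2 {K : SComplex} {t w a b : ℕ} (h : SD K t w a b) {s Φ : Finset ℕ}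
    (hΦ : Φ ∈ K.faces) (hs1 : t ∉ s) (has : a ∉ s) (hsΦ : carr t w a b s ⊆ Φ) :
    ∃ φ ∈ (K.sub t w a b).faces, s ⊆ φ ∧ carr t w a b φ = Φ ∧ φ.card = Φ.card ∧
      Φ.erase t ⊆ φ ∧ (t ∈ Φ → w ∈ Φ → b ∈ φ) := by
  obtain ⟨hat, haw, hbt, hbw⟩ := h.ne
  have hab := h.ab
  have htw := h.tw
  have fa := h.fa _ hΦ
  have fb := h.fb _ hΦ
  have hsv : ∀ v ∈ s, v ≠ b → v ∈ Φ := by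
    intro v hv hvb
    exact hsΦ (by rw [mem_carr _ _ _ _ _ _ hab]; grind)
  have hsb : b ∈ s → t ∈ Φ ∧ w ∈ Φ := by
    intro hb
    exact ⟨hsΦ (by rw [mem_carr _ _ _ _ _ _ hab]; grind),
      hsΦ (by rw [mem_carr _ _ _ _ _ _ hab]; grind)⟩
  by_cases ht : t ∈ Φ
  · by_cases hw : w ∈ Φ
    · have hc : carr t w a b (insert b (Φ.erase t)) = Φ := by
        ext v
        rw [mem_carr _ _ _ _ _ _ hab]
        grind
      refine ⟨insert b (Φ.erase t), ?_, ?_, hc, ?_, Finset.subset_insert _ _, by simp⟩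
      · rw [mem_sub h, hc]
        exact ⟨hΦ, by grind, by grind⟩
      · intro v hv
        have := hsv v hv
        grind
      · rw [Finset.card_insert_of_notMem (by grind), Finset.card_erase_add_one ht]
    · have hc : carr t w a b (insert a (Φ.erase t)) = Φ := by
        ext v
        rw [mem_carr _ _ _ _ _ _ hab]
        grind
      refine ⟨insert a (Φ.erase t), ?_, ?_, hc, ?_, Finset.subset_insert _ _, by tauto⟩
      · rw [mem_sub h, hc]
        exact ⟨hΦ, by grind, by grind⟩
      · intro v hv
        have := hsv v hv
        grind
      · rw [Finset.card_insert_of_notMem (by grind), Finset.card_erase_add_one ht]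
  · have hc : carr t w a b Φ = Φ := by
      ext v
      rw [mem_carr _ _ _ _ _ _ hab]
      grind
    refine ⟨Φ, ?_, ?_, hc, rfl, Finset.erase_subset _ _, by tauto⟩
    · rw [mem_sub h, hc]
      exact ⟨hΦ, by grind, by grind⟩
    · intro v hv
      have := hsv v hv
      grind

theorem sub_lift {K : SComplex} {t w a b : ℕ} (h : SD K t w a b) {s Φ Ψ : Finset ℕ}
    (hΦ : Φ ∈ K.faces) (hΨ : Ψ ∈ K.faces) (hs1 : t ∉ s) (hs2 : ¬ (a ∈ s ∧ w ∈ s))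
    (hsΦ : carr t w a b s ⊆ Φ) (hsΨ : carr t w a b s ⊆ Ψ) :
    ∃ φ ∈ (K.sub t w a b).faces, ∃ ψ ∈ (K.sub t w a b).faces, s ⊆ φ ∧ s ⊆ ψ ∧
      carr t w a b φ = Φ ∧ carr t w a b ψ = Ψ ∧ φ.card = Φ.card ∧ ψ.card = Ψ.card ∧
      (Φ ∩ Ψ).card ≤ (φ ∩ ψ).card := by
  obtain ⟨hat, haw, hbt, hbw⟩ := h.ne
  have hab := h.ab
  have htw := h.tw
  have faΦ := h.fa _ hΦ
  have fbΦ := h.fb _ hΦ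
  by_cases ht : t ∈ Φ ∩ Ψ
  · obtain ⟨ht1, ht2⟩ := Finset.mem_inter.mp ht
    by_cases hw : w ∈ s
    · obtain ⟨φ, a1, a2, a3, a4, a5, a6⟩ := sub_lift2 h hΦ hs1 (by tauto) hsΦ
      obtain ⟨ψ, b1, b2, b3, b4, b5, b6⟩ := sub_lift2 h hΨ hs1 (by tauto) hsΨ
      refine ⟨φ, a1, ψ, b1, a2, b2, a3, b3, a4, b4, ?_⟩
      have hwc : w ∈ carr t w a b s := by rw [mem_carr _ _ _ _ _ _ hab]; grind
      have : insert b ((Φ ∩ Ψ).erase t) ⊆ φ ∩ ψ := by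
        intro v hv
        have := @a5 v
        have := @b5 v
        have := a6 ht1 (hsΦ hwc)
        have := b6 ht2 (hsΨ hwc)
        grind
      refine le_trans ?_ (Finset.card_le_card this)
      rw [Finset.card_insert_of_notMem (by grind), Finset.card_erase_add_one ht]
    · obtain ⟨φ, a1, a2, a3, a4, a5⟩ := sub_lift1 h hΦ hs1 hw hsΦ ht1
      obtain ⟨ψ, b1, b2, b3, b4, b5⟩ := sub_lift1 h hΨ hs1 hw hsΨ ht2
      refine ⟨φ, a1, ψ, b1, a2, b2, a3, b3, a4, b4, ?_⟩
      have : (Φ ∩ Ψ).image (fun v => if v = t then a else if v = w then b else v) ⊆ φ ∩ ψ := by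
        rw [a5, b5]
        exact Finset.subset_inter (Finset.image_subset_image Finset.inter_subset_left)
          (Finset.image_subset_image Finset.inter_subset_right)
      refine le_trans (le_of_eq ?_) (Finset.card_le_card this)
      symm
      refine Finset.card_image_of_injOn ?_
      intro x hx y hy hxy
      have hx' : x ∈ Φ ∩ Ψ := hx
      have hy' : y ∈ Φ ∩ Ψ := hy
      simp only at hxy
      clear a1 a2 a3 a4 a5 b1 b2 b3 b4 b5 this hsΦ hsΨ
      split_ifs at hxy <;> grind
  · have hans : a ∉ s := by
      intro ha
      have hh : t ∈ carr t w a b s := by rw [mem_carr _ _ _ _ _ _ hab]; tauto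
      exact ht (Finset.mem_inter.mpr ⟨hsΦ hh, hsΨ hh⟩)
    obtain ⟨φ, a1, a2, a3, a4, a5, a6⟩ := sub_lift2 h hΦ hs1 hans hsΦ
    obtain ⟨ψ, b1, b2, b3, b4, b5, b6⟩ := sub_lift2 h hΨ hs1 hans hsΨ
    refine ⟨φ, a1, ψ, b1, a2, b2, a3, b3, a4, b4, Finset.card_le_card ?_⟩
    intro v hv
    have := @a5 v
    have := @b5 v
    grind

theorem sub_facet {K : SComplex} {t w a b : ℕ} (hK : Good K) (h : SD K t w a b) {φ : Finset ℕ}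
    (hφ : φ ∈ (K.sub t w a b).faces) (hφ4 : φ.card = 4) : (carr t w a b φ).card = 4 := by
  obtain ⟨hat, haw, hbt, hbw⟩ := h.ne
  have hab := h.ab
  have htw := h.tw
  rw [mem_sub h] at hφ
  obtain ⟨h1, h2, h3⟩ := hφ
  have mc : ∀ v, v ∈ carr t w a b φ ↔
    (v ∈ φ ∧ v ≠ a ∧ v ≠ b) ∨ (v = t ∧ (a ∈ φ ∨ b ∈ φ)) ∨ (v = w ∧ b ∈ φ) := fun v =>
      mem_carr _ _ _ _ _ _ hab
  by_cases hb : b ∈ φ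
  · by_cases ha : a ∈ φ
    · have : carr t w a b φ = insert t (insert w ((φ.erase a).erase b)) := by
        ext v; rw [mc]; grind
      rw [this, Finset.card_insert_of_notMem (by grind), Finset.card_insert_of_notMem (by grind),
        Finset.card_erase_of_mem (by grind), Finset.card_erase_of_mem ha]
      omega
    · by_cases hw : w ∈ φ
      · have : carr t w a b φ = insert t (φ.erase b) := by
          ext v; rw [mc]; grind
        rw [this, Finset.card_insert_of_notMem (by grind), Finset.card_erase_of_mem hb]
        omega
      · exfalso
        have : carr t w a b φ = insert t (insert w (φ.erase b)) := by
          ext v; rw [mc]; grind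
        have h5 := hK.card_le h1
        rw [this, Finset.card_insert_of_notMem (by grind), Finset.card_insert_of_notMem (by grind),
          Finset.card_erase_of_mem hb] at h5
        omega
  · rw [carr_b hab hb]
    split_ifs with ha
    · rw [Finset.card_insert_of_notMem (by grind), Finset.card_erase_of_mem ha]
      omega
    · exact hφ4

theorem sub_fibre {K : SComplex} {t w a b : ℕ} (h : SD K t w a b) {φ ψ : Finset ℕ}
    (hφ : φ ∈ (K.sub t w a b).faces) (hψ : ψ ∈ (K.sub t w a b).faces) (hφ4 : φ.card = 4)
    (he : carr t w a b φ = carr t w a b ψ) : 3 ≤ (φ ∩ ψ).card := by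
  obtain ⟨hat, haw, hbt, hbw⟩ := h.ne
  have hab := h.ab
  have htw := h.tw
  rw [mem_sub h] at hφ hψ
  obtain ⟨h1, h2, h3⟩ := hφ
  obtain ⟨g1, g2, g3⟩ := hψ
  have fa := h.fa _ h1
  have fb := h.fb _ h1
  have key : ∀ v, ((v ∈ φ ∧ v ≠ a ∧ v ≠ b) ∨ (v = t ∧ (a ∈ φ ∨ b ∈ φ)) ∨ (v = w ∧ b ∈ φ)) ↔
      ((v ∈ ψ ∧ v ≠ a ∧ v ≠ b) ∨ (v = t ∧ (a ∈ ψ ∨ b ∈ ψ)) ∨ (v = w ∧ b ∈ ψ)) := by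
    intro v
    rw [← mem_carr _ _ _ _ _ _ hab, ← mem_carr _ _ _ _ _ _ hab, he]
  have kt := key t
  have kw := key w
  clear h1 g1 he fa fb
  by_cases hb : b ∈ φ
  · have hbψ : b ∈ ψ := by grind
    have hsub : φ \ {a, w} ⊆ φ ∩ ψ := by
      intro v hv
      have := key v
      grind
    refine le_trans ?_ (Finset.card_le_card hsub)
    by_cases ha : a ∈ φ
    · have : φ \ {a, w} = φ.erase a := by ext v; grind
      rw [this, Finset.card_erase_of_mem ha]; omega
    · have : φ \ {a, w} = φ.erase w := by ext v; grind
      rw [this]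
      have := Finset.pred_card_le_card_erase (s := φ) (a := w)
      omega
  · have hbψ : b ∉ ψ := by grind
    have : φ = ψ := by
      ext v
      have := key v
      by_cases hva : v = a
      · subst hva
        grind
      · grind
    rw [← this, Finset.inter_self]; omega

theorem sub_good {K : SComplex} {t w a b : ℕ} (hK : Good K) (h : SD K t w a b) :
    Good (K.sub t w a b) := by
  have pure : ∀ s ∈ (K.sub t w a b).faces, ∃ φ ∈ (K.sub t w a b).faces, s ⊆ φ ∧ φ.card = 4 := by
    intro s hs
    rw [mem_sub h] at hs
    obtain ⟨Φ, h1, h2, h3⟩ := hK.pure _ hs.1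
    obtain ⟨φ, g1, _, _, g2, _, _, _, g3, _⟩ := sub_lift h h1 h1 hs.2.1 hs.2.2 h2 h2
    exact ⟨φ, g1, g2, g3.trans h3⟩
  refine ⟨?_, pure, sub_ridge hK h, ?_⟩
  · obtain ⟨s, hs⟩ := hK.ne
    obtain ⟨φ, g1, _⟩ := sub_lift h (s := ∅) hs hs (by simp) (by simp) (by simp [carr])
      (by simp [carr])
    exact ⟨φ, g1⟩
  · intro s φ ψ hφ hψ hφ4 hψ4 hsφ hsψ
    have hφ' := (mem_sub h φ).mp hφ
    have hψ' := (mem_sub h ψ).mp hψ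
    have path := hK.conn (carr t w a b s) _ _ hφ'.1 hψ'.1 (sub_facet hK h hφ hφ4)
      (sub_facet hK h hψ hψ4) (carr_mono t w a b hsφ) (carr_mono t w a b hsψ)
    have : ∀ Ψ, Relation.ReflTransGen (K.Adj3 (carr t w a b s)) (carr t w a b φ) Ψ →
        ∀ ψ ∈ (K.sub t w a b).faces, ψ.card = 4 → s ⊆ ψ → carr t w a b ψ = Ψ →
        Relation.ReflTransGen ((K.sub t w a b).Adj3 s) φ ψ := by
      intro Ψ hΨ
      induction hΨ with
      | refl =>
        intro ψ k1 k2 k3 k4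
        exact Relation.ReflTransGen.single ⟨hφ, k1, hφ4, k2, hsφ, k3,
          sub_fibre h hφ k1 hφ4 k4.symm⟩
      | @tail X Ψ _ hXΨ ih =>
        intro ψ k1 k2 k3 k4
        obtain ⟨x1, x2, x3, x4, x5, x6, x7⟩ := hXΨ
        obtain ⟨χ, c1, ψ', c2, c3, c4, c5, c6, c7, c8, c9⟩ := sub_lift h x1 x2
          (fun hh => hφ'.2.1 (hsφ hh)) (fun hh => hφ'.2.2 ⟨hsφ hh.1, hsφ hh.2⟩) x5 x6
        refine ((ih χ c1 (c7.trans x3) c3 c5).tail (b := χ) (c := ψ')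
          ⟨c1, c2, c7.trans x3, c8.trans x4, c3, c4, x7.trans c9⟩).tail
          ⟨c2, k1, c8.trans x4, k2, c4, k3, sub_fibre h c2 k1 (c8.trans x4) (c6.trans k4.symm)⟩
    exact this _ path ψ hψ hψ4 hsψ rfl

theorem sub_CD {K : SComplex} {t w a b : ℕ} (h : SD K t w a b) : CD (K.sub t w a b) a b t := by
  obtain ⟨hat, haw, hbt, hbw⟩ := h.ne
  have hab := h.ab
  have htw := h.tw
  refine ⟨hab, ?_, fun σ hσ => ((mem_sub h σ).mp hσ).2.1, ?_⟩
  · rw [mem_sub h]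
    have : carr t w a b {a, b} = {t, w} := by
      ext v; rw [mem_carr _ _ _ _ _ _ hab]; grind
    rw [this]
    exact ⟨h.mem, by grind, by grind⟩
  · intro γ h1 h2 h3 h4
    rw [mem_sub h] at h3 h4 ⊢
    have : carr t w a b (insert a (insert b γ)) = carr t w a b (insert b γ) := by
      ext v; rw [mem_carr _ _ _ _ _ _ hab, mem_carr _ _ _ _ _ _ hab]; grind
    rw [this]
    refine ⟨h4.1, by grind, by grind⟩

theorem ext_faces {K L : SComplex} (h : K.faces = L.faces) : K = L := by
  cases K; cases L; cases h; rfl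

theorem sub_contr {K : SComplex} {t w a b : ℕ} (h : SD K t w a b) :
    (K.sub t w a b).contr a b t = K := by
  obtain ⟨hat, haw, hbt, hbw⟩ := h.ne
  have hab := h.ab
  have htw := h.tw
  apply ext_faces
  ext τ
  by_cases ht : t ∈ τ
  · obtain ⟨τ', hτ', rfl⟩ : ∃ τ', t ∉ τ' ∧ insert t τ' = τ :=
      ⟨τ.erase t, by simp, Finset.insert_erase ht⟩
    rw [contr_mem2 (sub_CD h) hτ', mem_sub h, mem_sub h]
    have ea : a ∉ τ' → b ∉ τ' → carr t w a b (insert a τ') = insert t τ' := by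
      intro h1 h2
      ext v; rw [mem_carr _ _ _ _ _ _ hab]; grind
    have eb : a ∉ τ' → b ∉ τ' → carr t w a b (insert b τ') = insert w (insert t τ') := by
      intro h1 h2
      ext v; rw [mem_carr _ _ _ _ _ _ hab]; grind
    constructor
    · rintro ⟨h1, h2, h3 | h3⟩
      · exact ea h1 h2 ▸ h3.1
      · exact K.down_closed _ (eb h1 h2 ▸ h3.1) _ (Finset.subset_insert _ _) (by simp)
    · intro hh
      have h1 := h.fa _ hh
      have h2 := h.fb _ hh
      have h1 : a ∉ τ' := by grind
      have h2 : b ∉ τ' := by grind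
      refine ⟨h1, h2, ?_⟩
      rw [ea h1 h2, eb h1 h2]
      by_cases hw : w ∈ τ'
      · right
        rw [Finset.insert_eq_of_mem (by grind)]
        exact ⟨hh, by grind, by grind⟩
      · left
        exact ⟨hh, by grind, by grind⟩
  · rw [contr_mem1 (sub_CD h) ht, mem_sub h]
    have e : a ∉ τ → b ∉ τ → carr t w a b τ = τ := by
      intro h1 h2
      ext v; rw [mem_carr _ _ _ _ _ _ hab]; grind
    constructor
    · rintro ⟨h1, h2, h3⟩
      exact e h2 h3 ▸ h1.1
    · intro hh
      have h1 := h.fa _ hh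
      have h2 := h.fb _ hh
      rw [e h1 h2]
      exact ⟨⟨hh, ht, by tauto⟩, h1, h2⟩

theorem main_ineq {K : SComplex} {t u w : ℕ} (hn : K.IsNormalPseudomanifold 3)
    (hmin : ∀ K' : SComplex, K'.IsNormalPseudomanifold 3 →
      (∃ M, EdgeContraction M K ∧ EdgeContraction M K') → K.g2 ≤ K'.g2)
    (htu : t ≠ u) (htw : t ≠ w) (huw : u ≠ w)
    (hm : ({t, u} : Finset ℕ) ∈ K.faces) (hmw : ({t, w} : Finset ℕ) ∈ K.faces)
    (hno : ({t, u, w} : Finset ℕ) ∉ K.faces)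
    (hlink : ∀ γ : Finset ℕ, γ ≠ ∅ → t ∉ γ → u ∉ γ → w ∉ γ → insert t γ ∈ K.faces →
      insert u γ ∈ K.faces → insert t (insert u γ) ∈ K.faces) :
    K.deg {t, u} ≤ K.deg {t, w} := by
  have hK := good_of_normal hn
  obtain ⟨a, ha⟩ := Infinite.exists_notMem_finset K.vertexSet
  obtain ⟨b, hb⟩ := Infinite.exists_notMem_finset (insert a K.vertexSet)
  have fresh : ∀ x, x ∉ K.vertexSet → ∀ σ ∈ K.faces, x ∉ σ := by
    intro x hx σ hσ hxσ
    exact hx ((mem_vertexSet K x).mpr (K.down_closed σ hσ _ (by simpa using hxσ) (by simp)))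
  rw [Finset.mem_insert, not_or] at hb
  have h : SD K t w a b := ⟨htw, hmw, Ne.symm hb.1, fresh a ha, fresh b hb.2⟩
  obtain ⟨hat, haw, hbt, hbw⟩ := h.ne
  have hab := h.ab
  have hau : a ≠ u := by have := h.fa _ hm; grind
  have hbu : b ≠ u := by have := h.fb _ hm; grind
  set M := K.sub t w a b with hMdef
  have hM : Good M := sub_good hK h
  obtain ⟨c, hc⟩ := Infinite.exists_notMem_finset M.vertexSet
  have mc : ∀ σ v, v ∈ carr t w a b σ ↔
    (v ∈ σ ∧ v ≠ a ∧ v ≠ b) ∨ (v = t ∧ (a ∈ σ ∨ b ∈ σ)) ∨ (v = w ∧ b ∈ σ) := fun σ v =>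
      mem_carr _ _ _ _ _ _ hab
  have tuw : ∀ σ ∈ K.faces, t ∈ σ → u ∈ σ → w ∈ σ → False := by
    intro σ h1 h2 h3 h4
    refine hno (K.down_closed σ h1 _ ?_ (by simp))
    intro v; simp only [Finset.mem_insert, Finset.mem_singleton]
    rintro (rfl | rfl | rfl) <;> assumption
  have h2 : CD M a u c := by
    refine ⟨hau, ?_, ?_, ?_⟩
    · rw [mem_sub h]
      have : carr t w a b {a, u} = {t, u} := by
        ext v; rw [mc]; grind
      rw [this]
      exact ⟨hm, by grind, by grind⟩
    · intro σ hσ hcσ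
      exact hc ((mem_vertexSet M c).mpr (M.down_closed σ hσ _ (by simpa using hcσ) (by simp)))
    · intro γ g1 g2 g3 g4
      rw [mem_sub h] at g3 g4 ⊢
      obtain ⟨g3, g3t, g3w⟩ := g3
      obtain ⟨g4, g4t, g4w⟩ := g4
      have hbγ : b ∉ γ := by
        intro hbγ
        refine tuw _ g4 ?_ ?_ ?_ <;> rw [mc] <;> grind
      have e3 : carr t w a b (insert a γ) = insert t γ := by
        ext v; rw [mc]; grind
      have e4 : carr t w a b (insert u γ) = insert u γ := by
        ext v; rw [mc]; grind
      have e5 : carr t w a b (insert a (insert u γ)) = insert t (insert u γ) := by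
        ext v; rw [mc]; grind
      rw [e3] at g3
      rw [e4] at g4
      rw [e5]
      refine ⟨?_, by grind, by grind⟩
      by_cases hγ : γ = ∅
      · subst hγ; exact hm
      · exact hlink γ hγ (by grind) g2 (by grind) g3 g4
  have hMK : M.contr a b t = K := sub_contr h
  have c1 : EdgeContraction M K := by
    refine ⟨a, b, ?_⟩
    have := contr_isContr hM (sub_CD h)
    rwa [hMK] at this
  have c2 : EdgeContraction M (M.contr a u c) := ⟨a, u, contr_isContr hM h2⟩
  have hg := hmin _ (contr_good hM h2).normal ⟨M, c1, c2⟩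
  have e1 := contr_g2 (M := M) (sub_CD h)
  rw [hMK] at e1
  have e2 := contr_g2 h2
  have d1 : M.deg {a, b} = K.deg {t, w} := by
    rw [deg_eq, deg_eq]
    congr 1
    ext v
    rw [mem_lk_vertexSet, mem_lk_vertexSet, mem_sub h]
    have e : v ≠ a → v ≠ b → carr t w a b (insert v {a, b}) = insert v {t, w} := by
      intro h1 h2
      ext x; rw [mc]; grind
    constructor
    · rintro ⟨h1, h2, h3⟩
      rw [e h1 h2] at h3
      grind
    · rintro ⟨h1, h2, h3⟩
      have := h.fa _ h3
      have := h.fb _ h3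
      have va : v ≠ a := by grind
      have vb : v ≠ b := by grind
      refine ⟨va, vb, ?_⟩
      rw [e va vb]
      refine ⟨h3, by grind, by grind⟩
  have d2 : M.deg {a, u} = K.deg {t, u} := by
    rw [deg_eq, deg_eq]
    congr 1
    ext v
    rw [mem_lk_vertexSet, mem_lk_vertexSet, mem_sub h]
    have e : v ≠ a → v ≠ b → carr t w a b (insert v {a, u}) = insert v {t, u} := by
      intro h1 h2
      ext x; rw [mc]; grind
    constructor
    · rintro ⟨h1, h2, h3⟩
      have vb : v ≠ b := by
        rintro rfl
        refine tuw _ h3.1 ?_ ?_ ?_ <;> rw [mc] <;> grind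
      rw [e h1 vb] at h3
      grind
    · rintro ⟨h1, h2, h3⟩
      have := h.fa _ h3
      have := h.fb _ h3
      have va : v ≠ a := by grind
      have vb : v ≠ b := by grind
      have vw : v ≠ w := by
        rintro rfl
        exact tuw _ h3 (by simp) (by simp) (by simp)
      refine ⟨va, h2, ?_⟩
      rw [e va vb]
      refine ⟨h3, by grind, by grind⟩
  rw [d1] at e1
  rw [d2] at e2
  omega

theorem main_setup {K : SComplex} {t u w t₁ : ℕ} (hK : InClassR K)
    (hu : ({u} : Finset ℕ) ∈ (K.lk {t}).faces)
    (hS : ((K.lk {t}).faces ∩ (K.lk {u}).faces) \ (K.lk {t, u}).faces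
            = ({{w}} : Finset (Finset ℕ)) ∨
          ((K.lk {t}).faces ∩ (K.lk {u}).faces) \ (K.lk {t, u}).faces
            = ({{w}, {t₁, w}} : Finset (Finset ℕ))) :
    K.deg {t, u} ≤ K.deg {t, w} := by
  obtain ⟨hn, _, _, _, hmin⟩ := hK
  have e1 : ∀ d (γ : Finset ℕ), γ ∩ {d} = ∅ ↔ d ∉ γ := by
    intro d γ
    rw [← Finset.disjoint_iff_inter_eq_empty, Finset.disjoint_singleton_right]
  have e2 : ∀ γ : Finset ℕ, γ ∩ {t, u} = ∅ ↔ t ∉ γ ∧ u ∉ γ := by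
    intro γ
    rw [← Finset.disjoint_iff_inter_eq_empty, Finset.disjoint_insert_right,
      Finset.disjoint_singleton_right]
  have ins : ∀ d (γ : Finset ℕ), γ ∪ {d} = insert d γ := by
    intro d γ; rw [Finset.union_comm, Finset.singleton_union]
  have ins2 : ∀ γ : Finset ℕ, γ ∪ {t, u} = insert t (insert u γ) := by
    intro γ
    ext v; simp only [Finset.mem_union, Finset.mem_insert, Finset.mem_singleton]; tauto
  have hw : ({w} : Finset ℕ) ∈
      ((K.lk {t}).faces ∩ (K.lk {u}).faces) \ (K.lk {t, u}).faces := by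
    rcases hS with hS | hS <;> rw [hS] <;> simp
  have hall : ∀ γ ∈ ((K.lk {t}).faces ∩ (K.lk {u}).faces) \ (K.lk {t, u}).faces, w ∈ γ := by
    intro γ hγ
    rcases hS with hS | hS <;> rw [hS] at hγ
    · rw [Finset.mem_singleton] at hγ
      rw [hγ]; simp
    · rw [Finset.mem_insert, Finset.mem_singleton] at hγ
      rcases hγ with rfl | rfl <;> simp
  rw [Finset.mem_sdiff, Finset.mem_inter, mem_lk, mem_lk, mem_lk, e1, e1, e2, ins, ins, ins2] at hw
  rw [mem_lk, e1, ins] at hu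
  obtain ⟨⟨⟨w1, w2, w3⟩, _, w4, w5⟩, w6⟩ := hw
  obtain ⟨u1, u2, u3⟩ := hu
  refine main_ineq hn (fun K' h1 h2 => hmin K' h1 (Or.inr (Or.inr (Or.inr h2))))
    (by grind) (by grind) (by grind) u3 w3 ?_ ?_
  · intro hh
    exact w6 ⟨w1, ⟨w2, w4⟩, hh⟩
  · intro γ hγ h1 h2 h3 h4 h5
    by_contra hcon
    refine h3 (hall γ ?_)
    rw [Finset.mem_sdiff, Finset.mem_inter, mem_lk, mem_lk, mem_lk, e1, e1, e2, ins, ins, ins2]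
    have hγK := K.down_closed _ h4 γ (Finset.subset_insert _ _) hγ
    exact ⟨⟨⟨hγK, h1, h4⟩, hγK, h2, h5⟩, fun hh => hcon hh.2.2⟩


/-- Lemma 3.7: bounds on degrees when `lk(t) ∩ lk(u) − lk(ut)` is a single vertex
`{w}` or a half-open edge `(t₁, w]` with `t₁ ∈ lk(ut)` singular. -/
theorem statement6 (K : SComplex) (t u w t₁ : ℕ) (hK : InClassR K)
    (ht : K.IsSingular t)
    (hu : ({u} : Finset ℕ) ∈ (K.lk {t}).faces) (huns : K.HasSphereLink 3 u)
    (ht₁mem : ({t₁} : Finset ℕ) ∈ (K.lk {t, u}).faces) (ht₁sing : K.IsSingular t₁)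
    (hS : ((K.lk {t}).faces ∩ (K.lk {u}).faces) \ (K.lk {t, u}).faces
            = ({{w}} : Finset (Finset ℕ)) ∨
          ((K.lk {t}).faces ∩ (K.lk {u}).faces) \ (K.lk {t, u}).faces
            = ({{w}, {t₁, w}} : Finset (Finset ℕ))) :
    K.deg {t, u} ≤ K.deg {t, w} ∧ K.deg {t, u} ≤ K.deg {u, w} := by
  refine ⟨main_setup hK hu hS, ?_⟩
  have hu' : ({t} : Finset ℕ) ∈ (K.lk {u}).faces := by
    rw [mem_lk] at hu ⊢
    obtain ⟨h1, h2, h3⟩ := hu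
    refine ⟨K.down_closed _ h3 _ (by simp) (by simp), by rw [Finset.inter_comm]; exact h2,
      by rw [Finset.union_comm]; exact h3⟩
  rw [Finset.pair_comm t u] at hS ⊢
  rw [Finset.inter_comm] at hS
  exact main_setup hK hu' hS

end SComplex
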